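/- Let G be a Grothendieck abelian category and (A, B) a complete hereditary cotorsion pair in G. Then both induced pairs in the category Ch(G) of cochain complexes are complete cotorsion pairs. Explicitly: (i) every cochain complex X over G admits short exact sequences of complexes 0 → X → B_X → P_X → 0 and 0 → B^X → P^X → X → 0 with B_X, B^X ∈ B̃ and Ext¹_{Ch(G)}(P_X, V) = 0 = Ext¹_{Ch(G)}(P^X, V) for every V ∈ B̃; and (ii) every cochain complex X over G admits short exact sequences of complexes 0 → X → F_X → A_X → 0 and 0 → F^X → A^X → X → 0 with A_X, A^X ∈ Ã and Ext¹_{Ch(G)}(U, F_X) = 0 = Ext¹_{Ch(G)}(U, F^X) for every U ∈ Ã. -/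

import Mathlib

open CategoryTheory CategoryTheory.Limits

universe w v u

variable {𝒢 : Type u} [Category.{v} 𝒢] [Abelian 𝒢]

/-- `Ext¹(A, B) = 0`, phrased as: every short exact sequence `0 → B → E → A → 0`
splits. -/
def Ext1Zero {C : Type*} [Category C] [Abelian C] (A B : C) : Prop :=
  ∀ (E : C) (i : B ⟶ E) (p : E ⟶ A) (w : i ≫ p = 0),
    (ShortComplex.mk i p w).ShortExact → ∃ s : A ⟶ E, s ≫ p = 𝟙 A

/-- The right `Ext¹`-orthogonal class `S^⊥` of a class of objects `S`. -/
def rightPerp {C : Type*} [Category C] [Abelian C] (S : Set C) : Set C :=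
  {B | ∀ A ∈ S, Ext1Zero A B}

/-- The left `Ext¹`-orthogonal class `⊥S` of a class of objects `S`. -/
def leftPerp {C : Type*} [Category C] [Abelian C] (S : Set C) : Set C :=
  {A | ∀ B ∈ S, Ext1Zero A B}

/-- `(𝓐, 𝓑)` is a cotorsion pair: `𝓐 = ⊥𝓑` and `𝓑 = 𝓐^⊥`. -/
structure IsCotorsionPair {C : Type*} [Category C] [Abelian C] (𝓐 𝓑 : Set C) : Prop where
  left_eq : 𝓐 = leftPerp 𝓑
  right_eq : 𝓑 = rightPerp 𝓐

/-- `(𝓐, 𝓑)` is a complete cotorsion pair: a cotorsion pair admitting approximation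
sequences `0 → X → B_X → A_X → 0` and `0 → B^X → A^X → X → 0` for every object `X`. -/
structure IsCompleteCotorsionPair {C : Type*} [Category C] [Abelian C] (𝓐 𝓑 : Set C)
    extends IsCotorsionPair 𝓐 𝓑 : Prop where
  approx₁ : ∀ X : C, ∃ (B A : C) (i : X ⟶ B) (p : B ⟶ A) (w : i ≫ p = 0),
    (ShortComplex.mk i p w).ShortExact ∧ B ∈ 𝓑 ∧ A ∈ 𝓐
  approx₂ : ∀ X : C, ∃ (B A : C) (i : B ⟶ A) (p : A ⟶ X) (w : i ≫ p = 0),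
    (ShortComplex.mk i p w).ShortExact ∧ B ∈ 𝓑 ∧ A ∈ 𝓐

/-- `(𝓐, 𝓑)` is a hereditary pair: `Extⁿ(A, B) = 0` for all `A ∈ 𝓐`, `B ∈ 𝓑`, `n ≥ 1`. -/
def IsHereditary {C : Type u} [Category.{v} C] [Abelian C] [HasExt.{w} C]
    (𝓐 𝓑 : Set C) : Prop :=
  ∀ A ∈ 𝓐, ∀ B ∈ 𝓑, ∀ n : ℕ, 1 ≤ n → Subsingleton (Abelian.Ext A B n)

/-- The class `Ã` of acyclic cochain complexes all of whose components and cycle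
objects `Zⁿ(X) = ker(Xⁿ → X^{n+1})` lie in `𝓐`. -/
def Tilde (𝓐 : Set 𝒢) : Set (CochainComplex 𝒢 ℤ) :=
  {X | (∀ n : ℤ, X.ExactAt n) ∧ (∀ n : ℤ, X.X n ∈ 𝓐) ∧ (∀ n : ℤ, X.cycles n ∈ 𝓐)}


namespace CotAux

attribute [local simp] pushout.inl_desc pushout.inl_desc_assoc pushout.inr_desc
  pushout.inr_desc_assoc pullback.lift_fst pullback.lift_fst_assoc pullback.lift_snd
  pullback.lift_snd_assoc

section Basic

variable {C : Type*} [Category C] [Abelian C]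

/-- Short exactness of a pair of composable morphisms. -/
def SES {A B D : C} (i : A ⟶ B) (p : B ⟶ D) : Prop :=
  ∃ w : i ≫ p = 0, (ShortComplex.mk i p w).ShortExact

lemma SES.w {A B D : C} {i : A ⟶ B} {p : B ⟶ D} (h : SES i p) : i ≫ p = 0 := h.choose

lemma SES.mono {A B D : C} {i : A ⟶ B} {p : B ⟶ D} (h : SES i p) : Mono i :=
  h.choose_spec.mono_f

lemma SES.epi {A B D : C} {i : A ⟶ B} {p : B ⟶ D} (h : SES i p) : Epi p :=
  h.choose_spec.epi_g

lemma SES.lift {A B D : C} {i : A ⟶ B} {p : B ⟶ D} (h : SES i p) {T : C} (k : T ⟶ B)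
    (hk : k ≫ p = 0) : ∃ l : T ⟶ A, l ≫ i = k := by
  have := h.mono
  exact ⟨_, h.choose_spec.exact.lift_f k hk⟩

lemma SES.desc {A B D : C} {i : A ⟶ B} {p : B ⟶ D} (h : SES i p) {T : C} (k : B ⟶ T)
    (hk : i ≫ k = 0) : ∃ l : D ⟶ T, p ≫ l = k := by
  have := h.epi
  exact ⟨_, h.choose_spec.exact.g_desc k hk⟩

lemma SES.of_lift {A B D : C} {i : A ⟶ B} {p : B ⟶ D} [Mono i] [Epi p] (w : i ≫ p = 0)
    (h : ∀ {T : C} (k : T ⟶ B), k ≫ p = 0 → ∃ l : T ⟶ A, l ≫ i = k) : SES i p := by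
  refine ⟨w, ?_⟩
  have hex : (ShortComplex.mk i p w).Exact := by
    apply ShortComplex.exact_of_f_is_kernel
    exact KernelFork.IsLimit.ofι' i w (fun k hk => ⟨(h k hk).choose, (h k hk).choose_spec⟩)
  exact { exact := hex, mono_f := by assumption, epi_g := by assumption }

lemma SES.of_desc {A B D : C} {i : A ⟶ B} {p : B ⟶ D} [Mono i] [Epi p] (w : i ≫ p = 0)
    (h : ∀ {T : C} (k : B ⟶ T), i ≫ k = 0 → ∃ l : D ⟶ T, p ≫ l = k) : SES i p := by
  refine ⟨w, ?_⟩
  have hex : (ShortComplex.mk i p w).Exact := by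
    apply ShortComplex.exact_of_g_is_cokernel
    exact CokernelCofork.IsColimit.ofπ' p w (fun k hk => ⟨(h k hk).choose, (h k hk).choose_spec⟩)
  exact { exact := hex, mono_f := by assumption, epi_g := by assumption }

lemma ses_cokernel {A B : C} (i : A ⟶ B) [Mono i] : SES i (cokernel.π i) :=
  SES.of_desc (by simp) (fun k hk => ⟨cokernel.desc i k hk, by simp⟩)

lemma ses_kernel {A B : C} (p : A ⟶ B) [Epi p] : SES (kernel.ι p) p :=
  SES.of_lift (by simp) (fun k hk => ⟨kernel.lift p k hk, by simp⟩)

/-- Pushout of a short exact sequence along a monomorphism. -/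
lemma ses_pushout {K P X B A : C} {k : K ⟶ P} {x : P ⟶ X} {b : K ⟶ B} {a : B ⟶ A}
    (h₁ : SES k x) (h₂ : SES b a) :
    ∃ (P' : C) (b' : B ⟶ P') (x' : P' ⟶ X) (p' : P ⟶ P') (a' : P' ⟶ A),
      SES b' x' ∧ SES p' a' ∧ p' ≫ x' = x ∧ b' ≫ a' = a ∧ k ≫ p' = b ≫ b' := by
  have := h₁.mono
  have := h₂.mono
  have := h₁.epi
  have := h₂.epi
  refine ⟨pushout k b, pushout.inr _ _, pushout.desc x 0 (by simp [h₁.w]), pushout.inl _ _,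
    pushout.desc 0 a (by simp [h₂.w]), ?_, ?_, by simp, by simp, pushout.condition⟩
  · have : Epi (pushout.desc x 0 (by simp [h₁.w]) : pushout k b ⟶ X) := by
      have : Epi (pushout.inl k b ≫ (pushout.desc x 0 (by simp [h₁.w]) : pushout k b ⟶ X)) := by
        simpa
      exact epi_of_epi (pushout.inl k b) _
    refine SES.of_desc (by simp) (fun f hf => ?_)
    obtain ⟨l, hl⟩ := h₁.desc (pushout.inl k b ≫ f) (by
      rw [pushout.condition_assoc, hf, comp_zero])
    exact ⟨l, by ext <;> simp [hl, hf]⟩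
  · have : Epi (pushout.desc 0 a (by simp [h₂.w]) : pushout k b ⟶ A) := by
      have : Epi (pushout.inr k b ≫ (pushout.desc 0 a (by simp [h₂.w]) : pushout k b ⟶ A)) := by
        simpa
      exact epi_of_epi (pushout.inr k b) _
    refine SES.of_desc (by simp) (fun f hf => ?_)
    obtain ⟨l, hl⟩ := h₂.desc (pushout.inr k b ≫ f) (by
      rw [← pushout.condition_assoc, hf, comp_zero])
    exact ⟨l, by ext <;> simp [hl, hf]⟩

/-- Pullback of a short exact sequence along an arbitrary morphism. -/
lemma ses_pullback_map {N M Z Y : C} {n : N ⟶ M} {p : M ⟶ Z} (h : SES n p) (g : Y ⟶ Z) :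
    ∃ (Q : C) (n' : N ⟶ Q) (p' : Q ⟶ Y) (m : Q ⟶ M), SES n' p' ∧ n' ≫ m = n ∧
      IsPullback p' m g p := by
  have := h.mono
  have := h.epi
  have hm : Mono (pullback.lift 0 n (by simp [h.w]) : N ⟶ pullback g p) := by
    have : Mono ((pullback.lift 0 n (by simp [h.w]) : N ⟶ pullback g p) ≫ pullback.snd g p) := by
      simpa
    exact mono_of_mono _ (pullback.snd g p)
  refine ⟨pullback g p, pullback.lift 0 n (by simp [h.w]), pullback.fst _ _, pullback.snd _ _,
    ?_, by simp, IsPullback.of_hasPullback g p⟩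
  refine SES.of_lift (by simp) (fun f hf => ?_)
  obtain ⟨l, hl⟩ := h.lift (f ≫ pullback.snd g p) (by
    rw [Category.assoc, ← pullback.condition, reassoc_of% hf, zero_comp])
  exact ⟨l, by ext <;> simp [hl, hf]⟩

/-- Pullback of two short exact sequences. -/
lemma ses_pullback {X I E B A : C} {x : X ⟶ I} {e : I ⟶ E} {b : B ⟶ A} {a : A ⟶ E}
    (h₁ : SES x e) (h₂ : SES b a) :
    ∃ (F : C) (x' : X ⟶ F) (a' : F ⟶ A) (b' : B ⟶ F) (e' : F ⟶ I),
      SES x' a' ∧ SES b' e' := by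
  obtain ⟨F, b', e', m, hF, hb, hpb⟩ := ses_pullback_map h₂ e
  have := h₁.mono
  have := h₁.epi
  have hm : Mono (hpb.lift x 0 (by simp [h₁.w])) := by
    have : Mono (hpb.lift x 0 (by simp [h₁.w]) ≫ e') := by simpa
    exact mono_of_mono _ e'
  have : Epi m := by
    have := (hpb.flip)
    exact Abelian.epi_fst_of_isLimit _ _ hpb.flip.isLimit
  refine ⟨F, hpb.lift x 0 (by simp [h₁.w]), m, b', e', ?_, hF⟩
  refine SES.of_lift (by simp) (fun f hf => ?_)
  obtain ⟨l, hl⟩ := h₁.lift (f ≫ e') (by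
    rw [Category.assoc, hpb.w, reassoc_of% hf, zero_comp])
  exact ⟨l, hpb.hom_ext (by simp [hl]) (by simp [hf])⟩

lemma ses_comp_mono {X E P B A : C} {i : X ⟶ E} {p : E ⟶ P} {b : E ⟶ B} {a : B ⟶ A}
    (h₁ : SES i p) (h₂ : SES b a) :
    ∃ (Q : C) (q : B ⟶ Q) (s : P ⟶ Q) (t : Q ⟶ A), SES (i ≫ b) q ∧ SES s t ∧
      p ≫ s = b ≫ q ∧ q ≫ t = a := by
  have := h₁.mono
  have := h₂.mono
  have := h₁.epi
  have := h₂.epi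
  obtain ⟨s, hs⟩ := h₁.desc (b ≫ cokernel.π (i ≫ b)) (by
    rw [← Category.assoc, cokernel.condition])
  refine ⟨cokernel (i ≫ b), cokernel.π _, s, cokernel.desc _ a (by simp [h₂.w]),
    ses_cokernel _, ?_, hs, by simp⟩
  have : Epi (cokernel.desc (i ≫ b) a (by simp [h₂.w])) := by
    have : Epi (cokernel.π (i ≫ b) ≫ cokernel.desc (i ≫ b) a (by simp [h₂.w])) := by simpa
    exact epi_of_epi (cokernel.π _) _
  have : Mono s := by
    refine Preadditive.mono_of_cancel_zero _ (fun {T} x hx => ?_)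
    obtain ⟨T', π, _, y, hy⟩ := surjective_up_to_refinements_of_epi p x
    have h0 : (y ≫ b) ≫ cokernel.π (i ≫ b) = 0 := by
      rw [Category.assoc, ← hs, ← Category.assoc, ← hy, Category.assoc, hx, comp_zero]
    obtain ⟨l, hl⟩ := (ses_cokernel (i ≫ b)).lift _ h0
    have : y = l ≫ i := by rw [← cancel_mono b, ← hl, Category.assoc]
    rw [← cancel_epi π, hy, this, Category.assoc, h₁.w, comp_zero, comp_zero]
  refine SES.of_desc ?_ (fun {T} k hk => ?_)
  · rw [← cancel_epi p, reassoc_of% hs]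
    simp [h₂.w]
  · obtain ⟨l, hl⟩ := h₂.desc (cokernel.π (i ≫ b) ≫ k) (by
      rw [← reassoc_of% hs, hk, comp_zero])
    exact ⟨l, by ext; simp [hl]⟩

lemma ses_comp_epi {I E X B A : C} {i : I ⟶ E} {p : E ⟶ X} {b : B ⟶ A} {a : A ⟶ E}
    (h₁ : SES i p) (h₂ : SES b a) :
    ∃ (F : C) (f : F ⟶ A) (s : B ⟶ F) (t : F ⟶ I), SES f (a ≫ p) ∧ SES s t := by
  have := h₁.mono
  have := h₁.epi
  have := h₂.epi
  obtain ⟨F, s, t, m, hF, hm, hpb⟩ := ses_pullback_map h₂ i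
  refine ⟨F, m, s, t, ?_, hF⟩
  have : Mono m := by
    have : Mono i := h₁.mono
    exact (inferInstance : (MorphismProperty.monomorphisms C).IsStableUnderBaseChange).of_isPullback
      hpb this
  refine SES.of_lift (by rw [← Category.assoc, ← hpb.w, Category.assoc, h₁.w, comp_zero])
    (fun {T} k hk => ?_)
  obtain ⟨l, hl⟩ := h₁.lift (k ≫ a) (by simpa using hk)
  exact ⟨hpb.lift l k hl, by simp⟩

lemma _root_.Ext1Zero.section {A B E : C} (h : Ext1Zero A B) {i : B ⟶ E} {p : E ⟶ A} (hs : SES i p) :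
    ∃ s : A ⟶ E, s ≫ p = 𝟙 A := h E i p hs.w hs.choose_spec

lemma _root_.Ext1Zero.of_section {A B : C} (h : ∀ {E : C} {i : B ⟶ E} {p : E ⟶ A}, SES i p →
    ∃ s : A ⟶ E, s ≫ p = 𝟙 A) : Ext1Zero A B := fun _ _ _ w hs => h ⟨w, hs⟩

lemma SES.retraction_of_section {A B E : C} {i : B ⟶ E} {p : E ⟶ A} (hs : SES i p)
    {s : A ⟶ E} (h : s ≫ p = 𝟙 A) : ∃ r : E ⟶ B, i ≫ r = 𝟙 B ∧ s ≫ r = 0 := by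
  obtain ⟨r, hr⟩ := hs.lift (𝟙 E - p ≫ s) (by simp [h])
  have := hs.mono
  refine ⟨r, ?_, ?_⟩
  · rw [← cancel_mono i]
    simp [hr, reassoc_of% hs.w]
  · rw [← cancel_mono i]
    simp [hr, reassoc_of% h]

lemma SES.section_of_retraction {A B E : C} {i : B ⟶ E} {p : E ⟶ A} (hs : SES i p)
    {r : E ⟶ B} (h : i ≫ r = 𝟙 B) : ∃ s : A ⟶ E, s ≫ p = 𝟙 A ∧ p ≫ s = 𝟙 E - r ≫ i := by
  obtain ⟨s, hr⟩ := hs.desc (𝟙 E - r ≫ i) (by simp [reassoc_of% h])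
  have := hs.epi
  refine ⟨s, ?_, hr⟩
  rw [← cancel_epi p]
  simp [reassoc_of% hr, hs.w]

lemma _root_.Ext1Zero.of_retraction {A B : C} (h : ∀ {E : C} {i : B ⟶ E} {p : E ⟶ A}, SES i p →
    ∃ r : E ⟶ B, i ≫ r = 𝟙 B) : Ext1Zero A B := Ext1Zero.of_section (fun hs => by
  obtain ⟨r, hr⟩ := h hs
  obtain ⟨s, hs, _⟩ := hs.section_of_retraction hr
  exact ⟨s, hs⟩)

/-- The lifting lemma. -/
lemma _root_.Ext1Zero.lift {X Y P N M Z : C} (h : Ext1Zero P N) {i : X ⟶ Y} {c : Y ⟶ P}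
    {n : N ⟶ M} {p : M ⟶ Z} (hi : SES i c) (hp : SES n p) (f : X ⟶ M) (g : Y ⟶ Z)
    (comm : f ≫ p = i ≫ g) : ∃ l : Y ⟶ M, i ≫ l = f ∧ l ≫ p = g := by
  obtain ⟨Q, n', p', m, hQ, hn, hpb⟩ := ses_pullback_map hp g
  have := hi.mono
  have := hi.epi
  have := hQ.epi
  have := hQ.mono
  let j : X ⟶ Q := hpb.lift i f comm.symm
  have hj : j ≫ p' = i := by simp [j]
  have hj' : j ≫ m = f := by simp [j]
  have : Mono j := by
    have : Mono (j ≫ p') := by rw [hj]; infer_instance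
    exact mono_of_mono j p'
  -- the quotient sequence
  let π := cokernel.π j
  let ρ : cokernel j ⟶ P := cokernel.desc j (p' ≫ c) (by rw [← Category.assoc, hj, hi.w])
  have hρ : π ≫ ρ = p' ≫ c := by simp [π, ρ]
  have : Epi ρ := by
    have : Epi (π ≫ ρ) := by rw [hρ]; exact epi_comp _ _
    exact epi_of_epi π ρ
  have : Mono (n' ≫ π) := by
    refine Preadditive.mono_of_cancel_zero _ (fun {T} x hx => ?_)
    obtain ⟨l, hl⟩ := (ses_cokernel j).lift (x ≫ n') (by simpa [π] using hx)
    have : l = 0 := by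
      rw [← cancel_mono i, ← hj, reassoc_of% hl, hQ.w, comp_zero, zero_comp]
    rw [← cancel_mono n', ← hl, this, zero_comp, zero_comp]
  have hS : SES (n' ≫ π) ρ := by
    refine SES.of_desc (by rw [Category.assoc, hρ, reassoc_of% hQ.w, zero_comp])
      (fun {T} k hk => ?_)
    obtain ⟨l, hl⟩ := hQ.desc (π ≫ k) (by simpa using hk)
    obtain ⟨l', hl'⟩ := hi.desc l (by
      rw [← hj, Category.assoc, hl, ← Category.assoc, cokernel.condition, zero_comp])
    refine ⟨l', ?_⟩
    have : Epi π := inferInstanceAs (Epi (cokernel.π j))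
    rw [← cancel_epi π, reassoc_of% hρ, hl', hl]
  obtain ⟨s, hs⟩ := h.section hS
  obtain ⟨r, hr, _⟩ := hS.retraction_of_section hs
  obtain ⟨t, ht, ht'⟩ := hQ.section_of_retraction (r := π ≫ r) (by simpa using hr)
  refine ⟨t ≫ m, ?_, ?_⟩
  · rw [← hj, Category.assoc, reassoc_of% ht', Preadditive.sub_comp, Preadditive.comp_sub,
      Category.id_comp, hj']
    simp only [Category.assoc]
    rw [← Category.assoc j, cokernel.condition, zero_comp, sub_zero]
  · rw [Category.assoc, ← hpb.w, reassoc_of% ht]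

open ZeroObject in
lemma ses_zero_left (P : C) : SES (0 : (0 : C) ⟶ P) (𝟙 P) :=
  SES.of_desc (by simp) (fun k _ => ⟨k, by simp⟩)

open ZeroObject in
lemma ses_zero_right (P : C) : SES (𝟙 P) (0 : P ⟶ (0 : C)) :=
  SES.of_lift (by simp) (fun k _ => ⟨k, by simp⟩)

lemma _root_.Ext1Zero.lift_from {P N M Z : C} (h : Ext1Zero P N)
    {n : N ⟶ M} {p : M ⟶ Z} (hp : SES n p) (g : P ⟶ Z) : ∃ l : P ⟶ M, l ≫ p = g := by
  obtain ⟨l, _, hl⟩ := h.lift (ses_zero_left P) hp 0 g (by simp)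
  exact ⟨l, hl⟩

lemma _root_.Ext1Zero.extend {X Y P N : C} (h : Ext1Zero P N) {i : X ⟶ Y} {c : Y ⟶ P}
    (hi : SES i c) (f : X ⟶ N) : ∃ l : Y ⟶ N, i ≫ l = f := by
  obtain ⟨l, hl, _⟩ := h.lift hi (ses_zero_right N) f 0 (by simp)
  exact ⟨l, hl⟩

lemma _root_.Ext1Zero.ext_left {P₁ P P₂ N : C} {i : P₁ ⟶ P} {p : P ⟶ P₂} (hs : SES i p)
    (h₁ : Ext1Zero P₁ N) (h₂ : Ext1Zero P₂ N) : Ext1Zero P N :=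
  Ext1Zero.of_section (fun {E j q} hE => by
    obtain ⟨l, hl⟩ := h₁.lift_from hE i
    obtain ⟨s, _, hs⟩ := h₂.lift hs hE l (𝟙 P) (by simp [hl])
    exact ⟨s, hs⟩)

lemma _root_.Ext1Zero.ext_right {A N₁ N N₂ : C} {i : N₁ ⟶ N} {p : N ⟶ N₂} (hs : SES i p)
    (h₁ : Ext1Zero A N₁) (h₂ : Ext1Zero A N₂) : Ext1Zero A N :=
  Ext1Zero.of_retraction (fun {E j q} hE => by
    obtain ⟨l, hl⟩ := h₂.extend hE p
    obtain ⟨s, hs, _⟩ := h₁.lift hE hs (𝟙 _) l (by simp [hl])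
    exact ⟨s, hs⟩)

lemma _root_.Ext1Zero.retract {A A' N : C} (h : Ext1Zero A N) (i : A' ⟶ A) (r : A ⟶ A')
    (hir : i ≫ r = 𝟙 A') : Ext1Zero A' N :=
  Ext1Zero.of_section (fun {E j q} hE => by
    obtain ⟨l, hl⟩ := h.lift_from hE r
    exact ⟨i ≫ l, by rw [Category.assoc, hl, hir]⟩)

lemma _root_.Ext1Zero.of_iso_left {A A' N : C} (h : Ext1Zero A N) (e : A ≅ A') : Ext1Zero A' N :=
  h.retract e.inv e.hom (by simp)

lemma _root_.Ext1Zero.of_iso_right {A N N' : C} (h : Ext1Zero A N) (e : N ≅ N') : Ext1Zero A N' :=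
  Ext1Zero.of_retraction (fun {E j q} hE => by
    obtain ⟨l, hl⟩ := h.extend hE e.inv
    exact ⟨l ≫ e.hom, by simp [reassoc_of% hl]⟩)

lemma ext1Zero_of_ext {C : Type u} [Category.{v} C] [Abelian C] [HasExt.{w} C] (A B : C)
    (h : Subsingleton (Abelian.Ext A B 1)) : Ext1Zero A B := by
  intro E i p w hS
  obtain ⟨x, hx⟩ := Abelian.Ext.covariant_sequence_exact₃ A hS (Abelian.Ext.mk₀ (𝟙 A)) (zero_add 1)
    (Subsingleton.elim _ _)
  obtain ⟨s, rfl⟩ := Abelian.Ext.homEquiv₀.symm.surjective x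
  refine ⟨s, ?_⟩
  apply Abelian.Ext.homEquiv₀.symm.injective
  simpa using hx

lemma subsingleton_ext_of_ses {C : Type u} [Category.{v} C] [Abelian C] [HasExt.{w} C] {A B₁ B₂ B₃ : C}
    {i : B₁ ⟶ B₂} {p : B₂ ⟶ B₃} (hs : SES i p)
    (h₁ : Subsingleton (Abelian.Ext A B₁ 2)) (h₂ : Subsingleton (Abelian.Ext A B₂ 1)) :
    Subsingleton (Abelian.Ext A B₃ 1) := by
  have key : ∀ x : Abelian.Ext A B₃ 1, x = 0 := by
    intro x
    obtain ⟨y, hy⟩ := Abelian.Ext.covariant_sequence_exact₃ A hs.choose_spec x rfl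
      (Subsingleton.elim _ _)
    rw [← hy, Subsingleton.elim y 0]
    simp
  exact ⟨fun a b => by rw [key a, key b]⟩

end Basic

end CotAux


namespace CotAux

section Complexes

variable {𝒢 : Type u} [Category.{v} 𝒢] [Abelian 𝒢]

lemma exactAt_succ_iff (X : CochainComplex 𝒢 ℤ) (n : ℤ) :
    X.ExactAt (n + 1) ↔ ∀ ⦃A : 𝒢⦄ (x : A ⟶ X.X (n + 1)) (_ : x ≫ X.d (n + 1) (n + 1 + 1) = 0),
      ∃ (A' : 𝒢) (π : A' ⟶ A) (_ : Epi π) (y : A' ⟶ X.X n), π ≫ x = y ≫ X.d n (n + 1) :=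
  X.exactAt_iff_exact_up_to_refinements n (n + 1) (n + 1 + 1) (by simp) (by simp)

lemma acyclic_of_succ {X : CochainComplex 𝒢 ℤ} (h : ∀ n, X.ExactAt (n + 1)) : X.Acyclic :=
  fun n => by simpa using h (n - 1)

lemma acyclic_of_ses {X : CochainComplex 𝒢 ℤ} (Z : ℤ → 𝒢) (i : ∀ n, Z n ⟶ X.X n)
    (p : ∀ n, X.X n ⟶ Z (n + 1)) (hs : ∀ n, SES (i n) (p n))
    (hd : ∀ n, X.d n (n + 1) = p n ≫ i (n + 1)) :
    X.Acyclic := by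
  refine acyclic_of_succ fun n => ?_
  rw [exactAt_succ_iff]
  intro A x hx
  have := (hs (n + 1 + 1)).mono
  have := (hs n).epi
  rw [hd, ← Category.assoc] at hx
  have hx' : x ≫ p (n + 1) = 0 := zero_of_comp_mono _ hx
  obtain ⟨l, hl⟩ := (hs (n + 1)).lift x hx'
  obtain ⟨A', π, hπ, y, hy⟩ := surjective_up_to_refinements_of_epi (p n) l
  exact ⟨A', π, hπ, y, by rw [hd, ← reassoc_of% hy, hl]⟩

lemma cycles_iso_of_ses {X : CochainComplex 𝒢 ℤ} (Z : ℤ → 𝒢) (i : ∀ n, Z n ⟶ X.X n)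
    (p : ∀ n, X.X n ⟶ Z (n + 1)) (hs : ∀ n, SES (i n) (p n))
    (hd : ∀ n, X.d n (n + 1) = p n ≫ i (n + 1)) (n : ℤ) :
    ∃ e : X.cycles n ≅ Z n, e.hom ≫ i n = X.iCycles n := by
  have := (hs n).mono
  have := (hs (n + 1)).mono
  have w : i n ≫ X.d n (n + 1) = 0 := by rw [hd, ← Category.assoc, (hs n).w, zero_comp]
  have hl : ∀ {W : 𝒢} (k : W ⟶ X.X n) (hk : k ≫ X.d n (n + 1) = 0), ∃ l, l ≫ i n = k := by
    intro W k hk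
    apply (hs n).lift
    rw [hd, ← Category.assoc] at hk
    exact zero_of_comp_mono _ hk
  obtain ⟨l, hl'⟩ := hl (X.iCycles n) (by simp)
  refine ⟨⟨l, X.liftCycles (i n) (n + 1) (by simp) w, ?_, ?_⟩, hl'⟩
  · rw [← cancel_mono (X.iCycles n)]; simp [hl']
  · rw [← cancel_mono (i n)]; simp [hl']

lemma ses_cycles {X : CochainComplex 𝒢 ℤ} (h : X.Acyclic) (n : ℤ) :
    SES (X.iCycles n) (X.toCycles n (n + 1)) := by
  have : Epi (X.toCycles n (n + 1)) := by
    rw [epi_iff_surjective_up_to_refinements]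
    intro A y
    obtain ⟨A', π, hπ, x, hx⟩ := (exactAt_succ_iff X n).1 (h _) (y ≫ X.iCycles _) (by simp)
    refine ⟨A', π, hπ, x, ?_⟩
    rw [← cancel_mono (X.iCycles (n + 1))]
    simpa using hx
  refine SES.of_lift ?_ ?_
  · rw [← cancel_mono (X.iCycles (n + 1))]; simp
  · intro T k hk
    refine ⟨X.liftCycles k (n + 1) (by simp) ?_, X.liftCycles_i _ _ _ _⟩
    rw [← X.toCycles_i, ← Category.assoc, hk, zero_comp]

lemma SES.eval {X Y Z : CochainComplex 𝒢 ℤ} {f : X ⟶ Y} {g : Y ⟶ Z} (h : SES f g) (n : ℤ) :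
    SES (f.f n) (g.f n) := by
  obtain ⟨w, hs⟩ := h
  have := (HomologicalComplex.shortExact_iff_degreewise_shortExact (ShortComplex.mk f g w)).1 hs n
  exact ⟨by rw [← HomologicalComplex.comp_f, w]; rfl, this⟩

lemma SES.of_eval {X Y Z : CochainComplex 𝒢 ℤ} {f : X ⟶ Y} {g : Y ⟶ Z}
    (h : ∀ n, SES (f.f n) (g.f n)) : SES f g := by
  have w : f ≫ g = 0 := by ext n; exact (h n).w
  refine ⟨w, ?_⟩
  rw [HomologicalComplex.shortExact_iff_degreewise_shortExact]
  exact fun n => (h n).choose_spec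

lemma acyclic_mid {X Y Z : CochainComplex 𝒢 ℤ} {f : X ⟶ Y} {g : Y ⟶ Z} (h : SES f g)
    (hX : X.Acyclic) (hZ : Z.Acyclic) : Y.Acyclic :=
  h.choose_spec.acyclic_X₂ hX hZ

lemma acyclic_left {X Y Z : CochainComplex 𝒢 ℤ} {f : X ⟶ Y} {g : Y ⟶ Z} (h : SES f g)
    (hY : Y.Acyclic) (hZ : Z.Acyclic) : X.Acyclic := by
  refine h.choose_spec.acyclic_X₁ ⟨fun n => ?_⟩
  exact (quasiIsoAt_iff_exactAt g n (hY n)).2 (hZ n)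

lemma acyclic_right {X Y Z : CochainComplex 𝒢 ℤ} {f : X ⟶ Y} {g : Y ⟶ Z} (h : SES f g)
    (hX : X.Acyclic) (hY : Y.Acyclic) : Z.Acyclic := by
  refine h.choose_spec.acyclic_X₃ ⟨fun n => ?_⟩
  exact (quasiIsoAt_iff_exactAt f n (hX n)).2 (hY n)

lemma acyclic_of_iso {X Y : CochainComplex 𝒢 ℤ} (e : X ≅ Y) (h : X.Acyclic) : Y.Acyclic :=
  fun n => (h n).of_iso e

/-- Cycles of a short exact sequence with acyclic left term. -/
lemma ses_cyclesMap {X Y Z : CochainComplex 𝒢 ℤ} {f : X ⟶ Y} {g : Y ⟶ Z} (h : SES f g)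
    (hX : X.Acyclic) (n : ℤ) :
    SES (HomologicalComplex.cyclesMap f n) (HomologicalComplex.cyclesMap g n) := by
  have := (h.eval n).mono
  have hf1 := (h.eval (n+1)).mono
  have hf2 := (h.eval (n+1+1)).mono
  have := (h.eval n).epi
  have : Epi (HomologicalComplex.cyclesMap g n) := by
    rw [epi_iff_surjective_up_to_refinements]
    intro A z
    obtain ⟨A₁, π₁, _, y, hy⟩ := surjective_up_to_refinements_of_epi (g.f n) (z ≫ Z.iCycles n)
    obtain ⟨x, hx⟩ := (h.eval (n + 1)).lift (y ≫ Y.d n (n + 1)) (by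
      rw [Category.assoc, ← g.comm, ← Category.assoc, ← hy]; simp)
    obtain ⟨A₂, π₂, _, t, ht⟩ := (exactAt_succ_iff X n).1 (hX _) x (by
      rw [← cancel_mono (f.f (n + 1 + 1)), Category.assoc, ← f.comm, reassoc_of% hx]; simp)
    refine ⟨A₂, π₂ ≫ π₁, inferInstance,
      Y.liftCycles (π₂ ≫ y - t ≫ f.f n) (n + 1) (by simp) ?_, ?_⟩
    · rw [Preadditive.sub_comp, Category.assoc, Category.assoc, f.comm, ← reassoc_of% ht, hx, sub_self]
    · rw [← cancel_mono (Z.iCycles n)]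
      simp [hy, (h.eval n).w]
  refine SES.of_lift ?_ ?_
  · rw [← HomologicalComplex.cyclesMap_comp, h.w]; simp
  · intro T k hk
    obtain ⟨l, hl⟩ := (h.eval n).lift (k ≫ Y.iCycles n) (by
      rw [Category.assoc, ← HomologicalComplex.cyclesMap_i, ← Category.assoc, hk, zero_comp])
    refine ⟨X.liftCycles l (n + 1) (by simp) ?_, ?_⟩
    · rw [← cancel_mono (f.f (n + 1)), Category.assoc, ← f.comm, reassoc_of% hl]; simp
    · rw [← cancel_mono (Y.iCycles n)]; simp [hl]

end Complexes

/-- A class of objects closed under extensions and isomorphisms. -/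
structure ExtClosed {C : Type*} [Category C] [Abelian C] (S : Set C) : Prop where
  ext : ∀ {X Y Z : C} {f : X ⟶ Y} {g : Y ⟶ Z}, SES f g → X ∈ S → Z ∈ S → Y ∈ S
  iso : ∀ {X Y : C}, (X ≅ Y) → X ∈ S → Y ∈ S

section Classes

variable {C : Type*} [Category C] [Abelian C]

lemma extClosed_left {𝓐 𝓑 : Set C} (h : IsCotorsionPair 𝓐 𝓑) : ExtClosed 𝓐 where
  ext hs hX hZ := by
    rw [h.left_eq] at *
    exact fun B hB => Ext1Zero.ext_left hs (hX B hB) (hZ B hB)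
  iso e hX := by
    rw [h.left_eq] at *
    exact fun B hB => (hX B hB).of_iso_left e

lemma extClosed_right {𝓐 𝓑 : Set C} (h : IsCotorsionPair 𝓐 𝓑) : ExtClosed 𝓑 where
  ext hs hX hZ := by
    rw [h.right_eq] at *
    exact fun B hB => Ext1Zero.ext_right hs (hX B hB) (hZ B hB)
  iso e hX := by
    rw [h.right_eq] at *
    exact fun B hB => (hX B hB).of_iso_right e

lemma retract_left {𝓐 𝓑 : Set C} (h : IsCotorsionPair 𝓐 𝓑) {A A' : C} (hA : A ∈ 𝓐)
    (i : A' ⟶ A) (r : A ⟶ A') (hir : i ≫ r = 𝟙 _) : A' ∈ 𝓐 := by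
  rw [h.left_eq] at *
  exact fun B hB => (hA B hB).retract i r hir

lemma cotorsion_ext1Zero {𝓐 𝓑 : Set C} (h : IsCotorsionPair 𝓐 𝓑) {A B : C} (hA : A ∈ 𝓐)
    (hB : B ∈ 𝓑) : Ext1Zero A B := by
  rw [h.left_eq] at hA
  exact hA B hB

lemma coker_right {C : Type u} [Category.{v} C] [Abelian C] [HasExt.{w} C] {𝓐 𝓑 : Set C}
    (h : IsCotorsionPair 𝓐 𝓑) (hher : IsHereditary 𝓐 𝓑) {X Y Z : C} {f : X ⟶ Y} {g : Y ⟶ Z}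
    (hs : SES f g) (hX : X ∈ 𝓑) (hY : Y ∈ 𝓑) : Z ∈ 𝓑 := by
  rw [h.right_eq]
  intro A hA
  have h2 := hher A hA X hX 2 (by norm_num)
  have h1 := hher A hA Y hY 1 le_rfl
  apply ext1Zero_of_ext
  exact subsingleton_ext_of_ses hs h2 h1

end Classes

section Tilde

variable {𝒢 : Type u} [Category.{v} 𝒢] [Abelian 𝒢]

lemma Tilde.acyclic {S : Set 𝒢} {X : CochainComplex 𝒢 ℤ} (h : X ∈ Tilde S) : X.Acyclic := h.1

lemma Tilde.of_cycles {S : Set 𝒢} (hS : ExtClosed S) {X : CochainComplex 𝒢 ℤ} (h : X.Acyclic)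
    (hc : ∀ n, X.cycles n ∈ S) : X ∈ Tilde S :=
  ⟨h, fun n => hS.ext (ses_cycles h n) (hc _) (hc _), hc⟩

lemma Tilde.ext {S : Set 𝒢} (hS : ExtClosed S) {X Y Z : CochainComplex 𝒢 ℤ} {f : X ⟶ Y}
    {g : Y ⟶ Z} (h : SES f g) (hX : X ∈ Tilde S) (hZ : Z ∈ Tilde S) : Y ∈ Tilde S :=
  Tilde.of_cycles hS (acyclic_mid h hX.1 hZ.1)
    (fun n => hS.ext (ses_cyclesMap h hX.1 n) (hX.2.2 n) (hZ.2.2 n))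

end Tilde

end CotAux


namespace CotAux

section F5

variable {𝒢 : Type u} [Category.{v} 𝒢] [Abelian 𝒢]

lemma ses_to_pullback {V M U : CochainComplex 𝒢 ℤ} {v : V ⟶ M} {q : M ⟶ U} (h : SES v q)
    (hV : V.Acyclic) (hM : M.Acyclic) (n : ℤ) :
    SES (V.iCycles n ≫ v.f n)
      (pullback.lift (f := U.toCycles n (n + 1)) (g := HomologicalComplex.cyclesMap q (n + 1))
        (q.f n) (M.toCycles n (n + 1)) (by
          rw [← cancel_mono (U.iCycles (n + 1))]; simp)) := by
  have := (h.eval n).mono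
  have := (h.eval (n+1)).mono
  have hc := ses_cyclesMap h hV n
  have := hc.epi
  have := (ses_cycles hM n).epi
  refine @SES.of_lift _ _ _ _ _ _ _ _ (mono_comp _ _) ?_ ?_ ?_
  · rw [epi_iff_surjective_up_to_refinements]
    intro A y
    obtain ⟨A₁, π₁, _, m, hm⟩ := surjective_up_to_refinements_of_epi (M.toCycles n (n + 1))
      (y ≫ pullback.snd _ _)
    obtain ⟨A₂, π₂, _, z, hz⟩ := surjective_up_to_refinements_of_epi
      (HomologicalComplex.cyclesMap q n)
      (U.liftCycles (π₁ ≫ y ≫ pullback.fst _ _ - m ≫ q.f n) (n + 1) (by simp) (by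
        have h1 : y ≫ pullback.fst _ _ ≫ U.d n (n + 1) =
            y ≫ pullback.snd _ _ ≫ HomologicalComplex.cyclesMap q (n + 1) ≫ U.iCycles (n + 1) := by
          rw [← pullback.condition_assoc, U.toCycles_i]
        have h2 := congr($hm ≫ M.iCycles (n + 1) ≫ q.f (n + 1))
        simp at h1 h2
        simp [h1, h2]))
    refine ⟨A₂, π₂ ≫ π₁, inferInstance, π₂ ≫ m + z ≫ M.iCycles n, ?_⟩
    have hz' := congr($hz ≫ U.iCycles n)
    simp at hz'
    apply pullback.hom_ext
    · simp [pullback.lift_fst, ← hz']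
    · rw [← cancel_mono (M.iCycles (n + 1))]
      simp [pullback.lift_snd, reassoc_of% hm]
  · apply pullback.hom_ext
    · simp [pullback.lift_fst, (h.eval n).w]
    · rw [← cancel_mono (M.iCycles (n + 1))]
      simp [pullback.lift_snd_assoc]
  · intro T k hk
    have h1 := congr($hk ≫ pullback.fst _ _)
    have h2 := congr($hk ≫ pullback.snd _ _ ≫ M.iCycles (n + 1))
    simp [pullback.lift_fst] at h1
    simp [pullback.lift_snd_assoc] at h2
    obtain ⟨l, hl⟩ := (h.eval n).lift k h1
    refine ⟨V.liftCycles l (n + 1) (by simp) ?_, ?_⟩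
    · rw [← cancel_mono (v.f (n + 1)), Category.assoc, ← v.comm, reassoc_of% hl, h2, zero_comp]
    · simp [hl]

lemma ext1Zero_tilde {𝓐 𝓑 : Set 𝒢} (h : ∀ A ∈ 𝓐, ∀ B ∈ 𝓑, Ext1Zero A B)
    {U V : CochainComplex 𝒢 ℤ} (hU : U ∈ Tilde 𝓐) (hV : V ∈ Tilde 𝓑) : Ext1Zero U V := by
  refine Ext1Zero.of_section ?_
  intro M v q hs
  have hM := acyclic_mid hs hV.1 hU.1
  have hsec : ∀ n, ∃ s : U.cycles n ⟶ M.cycles n, s ≫ HomologicalComplex.cyclesMap q n = 𝟙 _ :=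
    fun n => (h _ (hU.2.2 n) _ (hV.2.2 n)).section (ses_cyclesMap hs hV.1 n)
  choose s hsec using hsec
  have key : ∀ n, ∃ t : U.X n ⟶ M.X n, t ≫ q.f n = 𝟙 _ ∧ U.iCycles n ≫ t = s n ≫ M.iCycles n ∧
      t ≫ M.d n (n + 1) = U.toCycles n (n + 1) ≫ s (n + 1) ≫ M.iCycles (n + 1) := by
    intro n
    obtain ⟨t, ht1, ht2⟩ := (h _ (hU.2.2 (n + 1)) _ (hV.2.2 n)).lift (ses_cycles hU.1 n)
      (ses_to_pullback hs hV.1 hM n) (s n ≫ M.iCycles n)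
      (pullback.lift (𝟙 _) (U.toCycles n (n + 1) ≫ s (n + 1)) (by simp [hsec])) (by
        have := congr($(hsec n) ≫ U.iCycles n)
        simp at this
        apply pullback.hom_ext
        · simp [pullback.lift_fst, this]
        · rw [← cancel_mono (M.iCycles (n + 1))]
          simp [pullback.lift_snd, reassoc_of% (ses_cycles hU.1 n).w])
    refine ⟨t, ?_, ht1, ?_⟩
    · have := congr($ht2 ≫ pullback.fst _ _)
      simpa [pullback.lift_fst] using this
    · have := congr($ht2 ≫ pullback.snd _ _ ≫ M.iCycles (n + 1))
      simpa [pullback.lift_snd_assoc] using this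
  choose t ht1 ht2 ht3 using key
  refine ⟨CochainComplex.ofHom t (fun n => ?_), ?_⟩
  · rw [ht3, ← ht2, HomologicalComplex.toCycles_i_assoc]
  · ext n; exact ht1 n

end F5

section Horseshoe

variable {𝒢 : Type u} [Category.{v} 𝒢] [Abelian 𝒢] [HasExt.{w} 𝒢] {𝓐 𝓑 : Set 𝒢}


lemma horseshoe_step (hpair : IsCompleteCotorsionPair 𝓐 𝓑) (hher : IsHereditary 𝓐 𝓑)
    {Z E Z' B A B' A' : 𝒢} {z : Z ⟶ E} {e : E ⟶ Z'} {b : Z ⟶ B} {a : B ⟶ A}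
    {b' : Z' ⟶ B'} {a' : B' ⟶ A'} (hE : SES z e) (hB : SES b a) (hB' : SES b' a')
    (h1 : B ∈ 𝓑) (h4 : A' ∈ 𝓐) :
    ∃ (M : 𝒢) (i : B ⟶ M) (p : M ⟶ B') (m : E ⟶ M), SES i p ∧ z ≫ m = b ≫ i ∧ m ≫ p = e ≫ b' := by
  obtain ⟨E1, i1, p1, j1, a1, hs1, hs2, c1, c2, c3⟩ := ses_pushout hE hB
  obtain ⟨B1, A1, k1, r1, w1, hs3, hB1, hA1⟩ := hpair.approx₁ E1
  have hs3 : SES k1 r1 := ⟨w1, hs3⟩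
  have := hs3.mono
  have := hs1.mono
  have hs4 := ses_cokernel (i1 ≫ k1)
  have hB2 : cokernel (i1 ≫ k1) ∈ 𝓑 := coker_right hpair.toIsCotorsionPair hher hs4 h1 hB1
  obtain ⟨d, hd⟩ := hs1.desc (k1 ≫ cokernel.π (i1 ≫ k1)) (by
    rw [← Category.assoc]; exact cokernel.condition _)
  obtain ⟨φ, hφ⟩ := (cotorsion_ext1Zero hpair.toIsCotorsionPair h4 hB2).extend hB' d
  obtain ⟨M, i, p, m, hs5, hm, hpb⟩ := ses_pullback_map hs4 φ
  refine ⟨M, i, p, hpb.lift (e ≫ b') (j1 ≫ k1) ?_, hs5, ?_, hpb.lift_fst _ _ _⟩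
  · simp only [Category.assoc, hφ, ← hd, ← c1]
  · apply hpb.hom_ext
    · simp [hs5.w, reassoc_of% hE.w]
    · simp [hm, reassoc_of% c3]

lemma exists_tilde_right (hpair : IsCompleteCotorsionPair 𝓐 𝓑) (hher : IsHereditary 𝓐 𝓑)
    {E : CochainComplex 𝒢 ℤ} (hE : E.Acyclic) :
    ∃ (B A : CochainComplex 𝒢 ℤ) (i : E ⟶ B) (p : B ⟶ A), SES i p ∧ B ∈ Tilde 𝓑 ∧ A ∈ Tilde 𝓐 := by
  have hcp := hpair.toIsCotorsionPair
  have h1 : ∀ n, ∃ (B A : 𝒢) (i : E.cycles n ⟶ B) (p : B ⟶ A), SES i p ∧ B ∈ 𝓑 ∧ A ∈ 𝓐 := by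
    intro n
    obtain ⟨B, A, i, p, w, h, hB, hA⟩ := hpair.approx₁ (E.cycles n)
    exact ⟨B, A, i, p, ⟨w, h⟩, hB, hA⟩
  choose B A b a hs hB hA using h1
  have h2 := fun n => horseshoe_step hpair hher (ses_cycles hE n) (hs n) (hs (n + 1)) (hB n)
    (hA (n + 1))
  choose M i p m hM hm1 hm2 using h2
  let K : CochainComplex 𝒢 ℤ := CochainComplex.of M (fun n => p n ≫ i (n + 1)) (by
    intro n
    rw [Category.assoc, reassoc_of% (hM (n + 1)).w]; simp)
  have hKd : ∀ n, K.d n (n + 1) = p n ≫ i (n + 1) := fun n => by simp [K]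
  have hKac : K.Acyclic := acyclic_of_ses B i p hM hKd
  have hKc := cycles_iso_of_ses (X := K) B i p hM hKd
  let f : E ⟶ K := CochainComplex.ofHom m (fun n => by
    rw [hKd, ← Category.assoc, hm2, Category.assoc, ← hm1, E.toCycles_i_assoc])
  have hf : ∀ n, Mono (f.f n) := by
    intro n
    refine Preadditive.mono_of_cancel_zero _ fun {T} g hg => ?_
    have := (hs (n + 1)).mono
    have := (hs n).mono
    have := (hM n).mono
    have hg' : g ≫ m n = 0 := hg
    obtain ⟨l, rfl⟩ := (ses_cycles hE n).lift g (by
      rw [← cancel_mono (b (n + 1)), Category.assoc, ← hm2, reassoc_of% hg']; simp)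
    rw [Category.assoc, hm1] at hg'
    have : l = 0 := by
      rw [← cancel_mono (b n ≫ i n), hg', zero_comp]
    rw [this, zero_comp]
  have : Mono f := HomologicalComplex.mono_of_mono_f f hf
  have hsf := ses_cokernel f
  have hKt : K ∈ Tilde 𝓑 := Tilde.of_cycles (extClosed_right hcp) hKac (fun n =>
    (extClosed_right hcp).iso (hKc n).choose.symm (hB n))
  refine ⟨K, _, f, _, hsf, hKt, Tilde.of_cycles (extClosed_left hcp) (acyclic_right hsf hE hKac) ?_⟩
  intro n
  have hc := ses_cyclesMap hsf hE n
  obtain ⟨e, he⟩ := hKc n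
  have hce : HomologicalComplex.cyclesMap f n ≫ e.hom = b n := by
    have := (hM n).mono
    rw [← cancel_mono (i n), Category.assoc, he, HomologicalComplex.cyclesMap_i, ← hm1]
  have := hc.epi
  have := (hs n).epi
  obtain ⟨x, hx⟩ := (hs n).desc (e.inv ≫ HomologicalComplex.cyclesMap (cokernel.π f) n) (by
    rw [← hce]; simp [hc.w])
  obtain ⟨y, hy⟩ := hc.desc (e.hom ≫ a n) (by rw [← Category.assoc, hce, (hs n).w])
  refine (extClosed_left hcp).iso ⟨x, y, ?_, ?_⟩ (hA n)
  · rw [← cancel_epi (a n), reassoc_of% hx, hy]; simp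
  · rw [← cancel_epi (HomologicalComplex.cyclesMap (cokernel.π f) n), reassoc_of% hy, hx]; simp

end Horseshoe

end CotAux


namespace CotAux

section Disks

variable {𝒢 : Type u} [Category.{v} 𝒢] [Abelian 𝒢] {𝓐 𝓑 : Set 𝒢}

lemma ses_inl_snd (X Y : 𝒢) : SES (biprod.inl : X ⟶ X ⊞ Y) biprod.snd :=
  SES.of_lift (by simp) (fun k hk => ⟨k ≫ biprod.fst, by
    apply biprod.hom_ext
    · simp
    · simp [hk]⟩)

lemma exists_epi_tilde (hpair : IsCompleteCotorsionPair 𝓐 𝓑) (X : CochainComplex 𝒢 ℤ) :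
    ∃ (A : CochainComplex 𝒢 ℤ) (f : A ⟶ X), Epi f ∧ A ∈ Tilde 𝓐 := by
  have h1 : ∀ n : ℤ, ∃ A : 𝒢, A ∈ 𝓐 ∧ ∀ m : ℤ, m + 1 = n → ∃ α : A ⟶ X.X m, Epi α := by
    intro n
    obtain ⟨B, A, i, p, w, h, hB, hA⟩ := hpair.approx₂ (X.X (n - 1))
    refine ⟨A, hA, fun m hm => ?_⟩
    obtain rfl : m = n - 1 := by lia
    exact ⟨p, h.epi_g⟩
  choose A hA α hα using h1
  let D : CochainComplex 𝒢 ℤ := CochainComplex.of (fun n => A n ⊞ A (n + 1))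
    (fun n => biprod.snd ≫ biprod.inl) (by intro n; simp)
  have hDd : ∀ n, D.d n (n + 1) = biprod.snd ≫ biprod.inl := fun n => by simp [D]
  have hac : D.Acyclic := acyclic_of_ses (X := D) A (fun n => biprod.inl) (fun n => biprod.snd)
    (fun n => ses_inl_snd _ _) hDd
  have hcy := cycles_iso_of_ses (X := D) A (fun n => biprod.inl) (fun n => biprod.snd)
    (fun n => ses_inl_snd _ _) hDd
  have hα' : ∀ n m m' h h', α n m h ≫ X.d m n = α n m' h' ≫ X.d m' n := by
    intro n m m' h h'
    obtain rfl : m = m' := by lia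
    rfl
  let F : ∀ n, A n ⊞ A (n + 1) ⟶ X.X n := fun n =>
    biprod.desc (α n (n - 1) (by simp) ≫ X.d (n - 1) n) (α (n + 1) n rfl)
  have hF : ∀ n, biprod.inr ≫ F n = α (n + 1) n rfl := fun n => by simp [F]
  refine ⟨D, CochainComplex.ofHom (X := D) F ?_, ?_, Tilde.of_cycles
    (extClosed_left hpair.toIsCotorsionPair) hac ?_⟩
  · intro n
    rw [hDd]
    apply biprod.hom_ext'
    · simp [F]
    · simp [F, hα' (n + 1) n (n + 1 - 1) rfl (by simp)]
  · apply HomologicalComplex.epi_of_epi_f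
    intro n
    have := hα (n + 1) n rfl
    exact epi_of_epi_fac (hF n)
  · exact fun n => (extClosed_left hpair.toIsCotorsionPair).iso (hcy n).choose.symm (hA n)

lemma exists_tilde_left [HasExt.{w} 𝒢] (hpair : IsCompleteCotorsionPair 𝓐 𝓑)
    (hher : IsHereditary 𝓐 𝓑) {E : CochainComplex 𝒢 ℤ} (hE : E.Acyclic) :
    ∃ (B A : CochainComplex 𝒢 ℤ) (i : B ⟶ A) (p : A ⟶ E), SES i p ∧ B ∈ Tilde 𝓑 ∧ A ∈ Tilde 𝓐 := by
  obtain ⟨A0, f, hf, hA0⟩ := exists_epi_tilde hpair E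
  have hK := ses_kernel f
  obtain ⟨B, A, b, a, hs, hB, hA⟩ := exists_tilde_right hpair hher (acyclic_left hK hA0.1 hE)
  obtain ⟨P, b', x', p', a', h1, h2, -⟩ := ses_pushout hK hs
  exact ⟨B, P, b', x', h1, hB,
    Tilde.ext (extClosed_left hpair.toIsCotorsionPair) h2 hA0 hA⟩

end Disks

end CotAux


namespace CotAux

section Filtered

variable {C : Type u} [Category.{v} C] [Abelian C] [IsGrothendieckAbelian.{v} C]
  {J : Type v} [SmallCategory J] [IsFiltered J] {F : J ⥤ C} {c : Cocone F}


lemma colim_local (hc : IsColimit c)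
    {T W : C} (x : T ⟶ c.pt) (g : T ⟶ W)
    (h : ∀ (j : J) (S : C) (s : S ⟶ T) (y : S ⟶ F.obj j), s ≫ x = y ≫ c.ι.app j → s ≫ g = 0) :
    g = 0 := by
  have := IsGrothendieckAbelian.IsPresentable.surjectivity.epi_f hc x
  rw [← cancel_epi (IsGrothendieckAbelian.IsPresentable.surjectivity.f x), comp_zero]
  apply colimit.hom_ext
  intro j
  rw [← Category.assoc, IsGrothendieckAbelian.IsPresentable.surjectivity.hf, comp_zero]
  apply h j _ _ ((pullback.fst c.ι ((Functor.const J).map x)).app j)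
  have := congr(NatTrans.app $(pullback.condition (f := c.ι) (g := (Functor.const J).map x)) j)
  simpa using this.symm

lemma colim_local_zero (hc : IsColimit c)
    {T W : C} {j : J} (y : T ⟶ F.obj j) (hy : y ≫ c.ι.app j = 0) (g : T ⟶ W)
    (h : ∀ (k : J) (f : j ⟶ k) (S : C) (s : S ⟶ T), s ≫ y ≫ F.map f = 0 → s ≫ g = 0) :
    g = 0 := by
  have := IsGrothendieckAbelian.IsPresentable.injectivity₀.epi_f hc hy
  rw [← cancel_epi (IsGrothendieckAbelian.IsPresentable.injectivity₀.f y), comp_zero]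
  apply colimit.hom_ext
  intro j
  rw [← Category.assoc, IsGrothendieckAbelian.IsPresentable.injectivity₀.hf, comp_zero]
  apply h j.right j.hom
  have := congr(NatTrans.app $(kernel.condition (IsGrothendieckAbelian.IsPresentable.injectivity₀.g y)) j)
  exact this

end Filtered

section FilteredCh

variable {𝒢 : Type u} [Category.{v} 𝒢] [Abelian 𝒢]

lemma exactAt_iff_pOpcycles (X : CochainComplex 𝒢 ℤ) (n : ℤ) :
    X.ExactAt n ↔ ∀ (T : 𝒢) (x : T ⟶ X.X n), x ≫ X.d n (n + 1) = 0 → x ≫ X.pOpcycles n = 0 := by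
  rw [X.exactAt_iff_exact_up_to_refinements (n - 1) n (n + 1) (by simp) (by simp)]
  refine ⟨fun h T x hx => ?_, fun h T x hx => ?_⟩
  · rw [X.comp_pOpcycles_eq_zero_iff_up_to_refinements x (n - 1) (by simp)]
    exact h x hx
  · rw [← X.comp_pOpcycles_eq_zero_iff_up_to_refinements x (n - 1) (by simp)]
    exact h T x hx

/-- The map induced on cohomology in degree `n` is zero. -/
def HZero {X Y : CochainComplex 𝒢 ℤ} (f : X ⟶ Y) (n : ℤ) : Prop :=
  ∀ (T : 𝒢) (x : T ⟶ X.X n), x ≫ X.d n (n + 1) = 0 → x ≫ f.f n ≫ Y.pOpcycles n = 0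

variable [IsGrothendieckAbelian.{v} 𝒢]
  {J : Type v} [SmallCategory J] [IsFiltered J] {F : J ⥤ CochainComplex 𝒢 ℤ} {c : Cocone F}

/-- the leg of a cocone of complexes -/
def leg {J : Type v} [SmallCategory J] {D : Type*} [Category D] {F : J ⥤ D}
    (c : Cocone F) (j : J) : F.obj j ⟶ c.pt := c.ι.app j

lemma leg_w {J : Type v} [SmallCategory J] {D : Type*} [Category D] {F : J ⥤ D}
    (c : Cocone F) {j k : J} (f : j ⟶ k) : F.map f ≫ leg c k = leg c j := c.w f

lemma leg_wf {J : Type v} [SmallCategory J] {F : J ⥤ CochainComplex 𝒢 ℤ}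
    (c : Cocone F) {j k : J} (f : j ⟶ k) (n : ℤ) :
    (F.map f).f n ≫ (leg c k).f n = (leg c j).f n := by
  rw [← leg_w c f, HomologicalComplex.comp_f]


lemma ch_local (hc : IsColimit c)
    (n : ℤ) {T W : 𝒢} (x : T ⟶ c.pt.X n) (g : T ⟶ W)
    (h : ∀ (j : J) (S : 𝒢) (s : S ⟶ T) (y : S ⟶ (F.obj j).X n),
      s ≫ x = y ≫ (leg c j).f n → s ≫ g = 0) : g = 0 :=
  colim_local (isColimitOfPreserves (HomologicalComplex.eval 𝒢 (ComplexShape.up ℤ) n) hc) x g h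

lemma ch_local_zero (hc : IsColimit c)
    (n : ℤ) {T W : 𝒢} {j : J} (y : T ⟶ (F.obj j).X n)
    (hy : y ≫ (leg c j).f n = 0) (g : T ⟶ W)
    (h : ∀ (k : J) (f : j ⟶ k) (S : 𝒢) (s : S ⟶ T), s ≫ y ≫ (F.map f).f n = 0 → s ≫ g = 0) :
    g = 0 :=
  colim_local_zero (isColimitOfPreserves (HomologicalComplex.eval 𝒢 (ComplexShape.up ℤ) n) hc)
    y hy g h

lemma colim_exactAt (hc : IsColimit c)
    (n : ℤ) (h : ∀ j, ∃ (k : J) (f : j ⟶ k), HZero (F.map f) n) :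
    c.pt.ExactAt n := by
  rw [exactAt_iff_pOpcycles]
  intro T x hx
  refine ch_local hc n x _ ?_
  intro j S s y hy
  rw [reassoc_of% hy]
  refine ch_local_zero hc (n + 1) (j := j) (T := S) (y ≫ (F.obj j).d n (n + 1)) ?_ _ ?_
  · rw [Category.assoc, ← HomologicalComplex.Hom.comm, ← reassoc_of% hy, hx, comp_zero]
  · intro k f S' s' h'
    obtain ⟨l, g, hg⟩ := h k
    have h1 := hg S' (s' ≫ y ≫ (F.map f).f n) (by simpa using h')
    have h2 : (leg c j).f n = (F.map f).f n ≫ (F.map g).f n ≫ (leg c l).f n := by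
      rw [leg_wf, leg_wf]
    have h3 := congr($h1 ≫ HomologicalComplex.opcyclesMap (leg c l) n)
    rw [h2]
    simpa using h3

lemma colim_kill (hc : IsColimit c)
    {n : ℤ} (hex : c.pt.ExactAt (n + 1)) {j₀ : J} {T W : 𝒢}
    (x : T ⟶ (F.obj j₀).X (n + 1)) (hx : x ≫ (F.obj j₀).d (n + 1) (n + 1 + 1) = 0) (g : T ⟶ W)
    (h : ∀ (k : J) (f : j₀ ⟶ k) (S : 𝒢) (s : S ⟶ T),
      s ≫ x ≫ (F.map f).f (n + 1) ≫ (F.obj k).pOpcycles (n + 1) = 0 → s ≫ g = 0) : g = 0 := by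
  obtain ⟨T', π, _, y, hy⟩ := (exactAt_succ_iff _ n).1 hex (x ≫ (leg c j₀).f (n + 1)) (by
    rw [Category.assoc, HomologicalComplex.Hom.comm, reassoc_of% hx, zero_comp])
  rw [← cancel_epi π, comp_zero]
  refine ch_local hc n y _ ?_
  intro j S s y' hy'
  let k := IsFiltered.max j₀ j
  let f₀ : j₀ ⟶ k := IsFiltered.leftToMax _ _
  let f₁ : j ⟶ k := IsFiltered.rightToMax _ _
  refine ch_local_zero hc (n + 1) (j := k) (T := S) (s ≫ π ≫ x ≫ (F.map f₀).f (n + 1) -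
    y' ≫ (F.map f₁).f n ≫ (F.obj k).d n (n + 1)) ?_ _ ?_
  · simp only [Preadditive.sub_comp, Category.assoc, leg_wf]
    rw [← HomologicalComplex.Hom.comm, reassoc_of% (leg_wf c f₁ n), hy, ← reassoc_of% hy', sub_self]
  · intro l f₂ S' s' h'
    simp only [Preadditive.sub_comp, Preadditive.comp_sub, Category.assoc, sub_eq_zero] at h'
    have := h l (f₀ ≫ f₂) S' (s' ≫ s ≫ π) (by
      rw [F.map_comp]
      simp only [Category.assoc, HomologicalComplex.comp_f]
      rw [reassoc_of% h', ← HomologicalComplex.Hom.comm_assoc]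
      simp)
    simpa using this

end FilteredCh

end CotAux


namespace CotAux

section SOA

variable {D : Type u} [Category.{v} D] [Abelian D] [IsGrothendieckAbelian.{v} D]

open MorphismProperty SmallObject in
lemma hasSmallObjectArgument_ofHoms {ι : Type v} {s t : ι → D} (m : ∀ i, s i ⟶ t i)
    (hm : ∀ i, Mono (m i)) : HasSmallObjectArgument.{v} (ofHoms m) := by
  obtain ⟨κ, hκ', hκ⟩ := HasCardinalLT.exists_regular_cardinal.{v} (Σ i, Subobject (s i))
  have : Fact κ.IsRegular := ⟨hκ'⟩
  have : Nonempty κ.ord.ToType := by simpa using hκ'.ne_zero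
  have := WellFoundedLT.toOrderBot κ.ord.ToType
  have hle : ofHoms m ≤ monomorphisms D := by
    rintro _ _ _ ⟨i⟩
    exact hm i
  exact ⟨κ, inferInstance, inferInstance,
    { preservesColimit {A B X Y} i hi f hf := by
        let hf' : (monomorphisms D).TransfiniteCompositionOfShape κ.ord.ToType f :=
          { toTransfiniteCompositionOfShape := hf.toTransfiniteCompositionOfShape
            map_mem j hj := by
              have := (hf.attachCells j hj).pushouts_coproducts
              simp only [ofHoms_homFamily] at this
              refine (?_ : _ ≤ monomorphisms D) _ this
              simp only [pushouts_le_iff, coproducts_le_iff]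
              exact hle }
        have (j j' : κ.ord.ToType) (φ : j ⟶ j') : Mono (hf'.F.map φ) := hf'.mem_map φ
        apply IsGrothendieckAbelian.preservesColimit_coyoneda_obj_of_mono (Y := hf'.F) (κ := κ)
        obtain ⟨i⟩ := hi
        exact hκ.of_injective (fun x : Subobject (s i) => (⟨i, x⟩ : Σ i, Subobject (s i)))
          (fun a b h => by simpa using h) }⟩

open ZeroObject in
/-- Small object argument for a small family of monomorphisms. -/
lemma soa {ι : Type v} {s t : ι → D} (m : ∀ i, s i ⟶ t i)
    (hm : ∀ i, Mono (m i)) (X : D) :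
    ∃ (I P : D) (i : X ⟶ I) (p : I ⟶ P), SES i p ∧
      (∀ k (f : s k ⟶ I), ∃ g, m k ≫ g = f) ∧
      (∀ K : D, (∀ k, Ext1Zero (cokernel (m k)) K) → Ext1Zero P K) := by
  have := hasSmallObjectArgument_ofHoms m hm
  obtain ⟨I, i, q, -, hi, hq⟩ := MorphismProperty.factorizationData
    (MorphismProperty.ofHoms m).rlp.llp (MorphismProperty.ofHoms m).rlp (0 : X ⟶ 0)
  have hmono : Mono i := by
    have h0 : (MorphismProperty.ofHoms m).rlp (0 : Injective.under X ⟶ 0) := by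
      rintro _ _ _ ⟨k⟩
      have := hm k
      refine ⟨fun {f g} sq => ⟨⟨⟨Injective.factorThru f (m k), by simp, (isZero_zero D).eq_of_tgt _ _⟩⟩⟩⟩
    have := hi _ h0
    have sq : CommSq (Injective.ι X) i (0 : Injective.under X ⟶ 0) 0 := ⟨by simp⟩
    exact mono_of_mono_fac sq.fac_left
  refine ⟨I, cokernel i, i, cokernel.π i, ses_cokernel i, fun k f => ?_, fun K hK => ?_⟩
  · have := hq _ ⟨k⟩
    have sq : CommSq f (m k) q 0 := ⟨(isZero_zero D).eq_of_tgt _ _⟩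
    exact ⟨sq.lift, sq.fac_left⟩
  · refine Ext1Zero.of_section (fun {E j r} hs => ?_)
    have h0 : (MorphismProperty.ofHoms m).rlp r := by
      rintro _ _ _ ⟨k⟩
      have := hm k
      refine ⟨fun {f g} sq => ?_⟩
      obtain ⟨l, h1, h2⟩ := (hK k).lift (ses_cokernel (m k)) hs f g sq.w
      exact ⟨⟨⟨l, h1, h2⟩⟩⟩
    have := hi _ h0
    have sq : CommSq (0 : X ⟶ E) i r (cokernel.π i) := ⟨by simp⟩
    refine ⟨cokernel.desc i sq.lift (by simp), ?_⟩
    rw [← cancel_epi (cokernel.π i)]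
    simp

end SOA

end CotAux


namespace CotAux

section Spheres

variable {𝒢 : Type u} [Category.{v} 𝒢] [Abelian 𝒢]

lemma ses_of_isZero_left {A B D : 𝒢} (i : A ⟶ B) (p : B ⟶ D) (hA : IsZero A) [IsIso p] :
    SES i p := by
  have : Mono i := ⟨fun _ _ _ => hA.eq_of_tgt _ _⟩
  exact SES.of_desc (hA.eq_of_src _ _) (fun k _ => ⟨inv p ≫ k, by simp⟩)

lemma ses_of_isZero_right {A B D : 𝒢} (i : A ⟶ B) (p : B ⟶ D) (hD : IsZero D) [IsIso i] :
    SES i p := by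
  have : Epi p := ⟨fun _ _ _ => hD.eq_of_src _ _⟩
  exact SES.of_lift (hD.eq_of_tgt _ _) (fun k _ => ⟨k ≫ inv i, by simp⟩)

/-- The sphere complex. -/
noncomputable abbrev Sph (n : ℤ) (A : 𝒢) : CochainComplex 𝒢 ℤ :=
  (HomologicalComplex.single 𝒢 (ComplexShape.up ℤ) n).obj A

/-- The disk complex. -/
noncomputable abbrev Dsk (n : ℤ) (A : 𝒢) : CochainComplex 𝒢 ℤ :=
  HomologicalComplex.double (𝟙 A) (show (ComplexShape.up ℤ).Rel n (n + 1) by simp)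

/-- inclusion of a sphere into a disk -/
noncomputable def sphDsk (n : ℤ) (A : 𝒢) : Sph (n + 1) A ⟶ Dsk n A :=
  HomologicalComplex.mkHomFromSingle
    (HomologicalComplex.doubleXIso₁ (𝟙 A) (show (ComplexShape.up ℤ).Rel n (n + 1) by simp)
      (by simp)).inv (fun k _ => by
        rw [HomologicalComplex.double_d_eq_zero₀ _ _ _ _ (by simp), comp_zero])

/-- projection from a disk to a sphere -/
noncomputable def dskSph (n : ℤ) (A : 𝒢) : Dsk n A ⟶ Sph n A :=
  HomologicalComplex.mkHomFromDouble _ (by simp)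
    (HomologicalComplex.singleObjXSelf (ComplexShape.up ℤ) n A).inv 0 (by simp) (by simp)

lemma ses_sph (n : ℤ) (A : 𝒢) : SES (sphDsk n A) (dskSph n A) := by
  apply SES.of_eval
  intro k
  by_cases h1 : k = n + 1
  · subst h1
    have : IsIso ((sphDsk n A).f (n + 1)) := by
      simp only [sphDsk, HomologicalComplex.mkHomFromSingle_f]; infer_instance
    exact ses_of_isZero_right _ _ (HomologicalComplex.isZero_single_obj_X _ _ _ _ (by simp))
  · by_cases h0 : k = n
    · subst h0
      have : IsIso ((dskSph k A).f k) := by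
        simp only [dskSph, HomologicalComplex.mkHomFromDouble_f₀]; infer_instance
      exact ses_of_isZero_left _ _ (HomologicalComplex.isZero_single_obj_X _ _ _ _ (by simp))
    · have hz := HomologicalComplex.isZero_double_X (𝟙 A)
        (show (ComplexShape.up ℤ).Rel n (n + 1) by simp) k h0 h1
      have hz' := HomologicalComplex.isZero_single_obj_X (ComplexShape.up ℤ) n A k h0
      have : IsIso ((dskSph n A).f k) := hz.isIso hz' _
      exact ses_of_isZero_left _ _ (HomologicalComplex.isZero_single_obj_X _ _ _ _ h1)

/-- maps from a sphere extend to the disk only if they are boundaries -/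
lemma sph_lift {X : CochainComplex 𝒢 ℤ} {n : ℤ} {A : 𝒢}
    (h : ∀ f : Sph (n + 1) A ⟶ X, ∃ g, sphDsk n A ≫ g = f) (x : A ⟶ X.X (n + 1))
    (hx : x ≫ X.d (n + 1) (n + 1 + 1) = 0) : ∃ y : A ⟶ X.X n, y ≫ X.d n (n + 1) = x := by
  obtain ⟨g, hg⟩ := h (HomologicalComplex.mkHomFromSingle x (fun k hk => by
    obtain rfl : n + 1 + 1 = k := by simpa using hk
    exact hx))
  have h1 := congr(HomologicalComplex.Hom.f $hg (n + 1))
  simp only [HomologicalComplex.comp_f, sphDsk, HomologicalComplex.mkHomFromSingle_f,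
    Category.assoc, Iso.cancel_iso_hom_left] at h1
  refine ⟨(HomologicalComplex.doubleXIso₀ (𝟙 A)
    (show (ComplexShape.up ℤ).Rel n (n + 1) by simp)).inv ≫ g.f n, ?_⟩
  rw [Category.assoc, HomologicalComplex.Hom.comm, HomologicalComplex.double_d _ _ (by simp), ← h1]
  simp

lemma ext1Zero_sph {𝓐 𝓑 : Set 𝒢} (h : ∀ A ∈ 𝓐, ∀ B ∈ 𝓑, Ext1Zero A B) {A : 𝒢} (hA : A ∈ 𝓐)
    (n : ℤ) {V : CochainComplex 𝒢 ℤ} (hV : V ∈ Tilde 𝓑) : Ext1Zero (Sph n A) V := by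
  refine Ext1Zero.of_section (fun {E i p} hs => ?_)
  have hc := ses_cyclesMap hs hV.1 n
  let a : A ⟶ (Sph n A).cycles n := (Sph n A).liftCycles
    (HomologicalComplex.singleObjXSelf (ComplexShape.up ℤ) n A).inv (n + 1) (by simp) (by simp)
  obtain ⟨l, hl⟩ := (h A hA _ (hV.2.2 n)).lift_from hc a
  have hl' := congr($hl ≫ HomologicalComplex.iCycles _ _)
  simp only [Category.assoc, HomologicalComplex.cyclesMap_i, a,
    HomologicalComplex.liftCycles_i] at hl'
  refine ⟨HomologicalComplex.mkHomFromSingle (l ≫ E.iCycles n) (by simp), ?_⟩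
  ext
  simp [hl']

lemma ext1Zero_acyclic_sph {E : CochainComplex 𝒢 ℤ} (hE : E.Acyclic) (m : ℤ) (Q : 𝒢)
    [Injective Q] : Ext1Zero E (Sph m Q) := by
  refine Ext1Zero.of_retraction (fun {M i p} hs => ?_)
  obtain ⟨k, rfl⟩ : ∃ k, m = k + 1 + 1 := ⟨m - 1 - 1, by simp⟩
  let s := HomologicalComplex.singleObjXSelf (ComplexShape.up ℤ) (k + 1 + 1) Q
  have hm : Mono (s.inv ≫ i.f (k + 1 + 1) ≫ M.pOpcycles (k + 1 + 1)) := by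
    apply Preadditive.mono_of_cancel_zero
    intro T x hx
    obtain ⟨T₁, π₁, _, y, hy⟩ := (M.comp_pOpcycles_eq_zero_iff_up_to_refinements
      (x ≫ s.inv ≫ i.f (k + 1 + 1)) (k + 1) (by simp)).1 (by simpa using hx)
    obtain ⟨T₂, π₂, _, z, hz⟩ := (exactAt_succ_iff E k).1 (hE _) (y ≫ p.f (k + 1)) (by
      rw [Category.assoc, HomologicalComplex.Hom.comm, ← reassoc_of% hy, (hs.eval _).w]
      simp)
    have := (hs.eval k).epi
    obtain ⟨T₃, π₃, _, z', hz'⟩ := surjective_up_to_refinements_of_epi (p.f k) z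
    obtain ⟨l, hl⟩ := (hs.eval (k + 1)).lift (π₃ ≫ π₂ ≫ y - z' ≫ M.d k (k + 1)) (by
      simp only [Preadditive.sub_comp, Category.assoc]
      rw [hz, ← HomologicalComplex.Hom.comm, reassoc_of% hz', sub_self])
    have hl0 : l = 0 := (HomologicalComplex.isZero_single_obj_X _ _ _ _ (by simp)).eq_of_tgt _ _
    rw [hl0, zero_comp, eq_comm, sub_eq_zero] at hl
    have := (hs.eval (k + 1 + 1)).mono
    rw [← cancel_epi (π₃ ≫ π₂ ≫ π₁), ← cancel_mono (s.inv ≫ i.f (k + 1 + 1))]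
    simp only [Category.assoc]
    rw [hy, reassoc_of% hl]
    simp
  let r := Injective.factorThru (𝟙 Q) (s.inv ≫ i.f (k + 1 + 1) ≫ M.pOpcycles (k + 1 + 1))
  have hr : (s.inv ≫ i.f (k + 1 + 1) ≫ M.pOpcycles (k + 1 + 1)) ≫ r = 𝟙 Q :=
    Injective.comp_factorThru _ _
  refine ⟨HomologicalComplex.mkHomToSingle (M.pOpcycles _ ≫ r) (fun _ _ => by simp), ?_⟩
  ext
  rw [Category.assoc, Category.assoc, Iso.inv_comp_eq, Category.comp_id] at hr
  simp only [HomologicalComplex.comp_f, HomologicalComplex.mkHomToSingle_f, Category.assoc]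
  rw [reassoc_of% hr]
  simp [s]

lemma acyclic_of_ext1Zero_sph [EnoughInjectives 𝒢] {P : CochainComplex 𝒢 ℤ}
    (h : ∀ (m : ℤ) (Q : 𝒢) [Injective Q], Ext1Zero P (Sph m Q)) : P.Acyclic := by
  intro n
  rw [exactAt_iff_pOpcycles]
  intro T x hx
  let j := Injective.ι (P.opcycles n)
  obtain ⟨l, hl⟩ := (h (n + 1) (Injective.under (P.opcycles n))).lift_from (ses_sph n _)
    (HomologicalComplex.mkHomToSingle (P.pOpcycles n ≫ j) (fun _ _ => by simp))
  have h1 := congr(HomologicalComplex.Hom.f $hl n)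
  simp only [HomologicalComplex.comp_f, dskSph, HomologicalComplex.mkHomToSingle_f,
    HomologicalComplex.mkHomFromDouble_f₀, ← Category.assoc, Iso.cancel_iso_inv_right] at h1
  have h2 := l.comm n (n + 1)
  rw [HomologicalComplex.double_d _ _ (by simp)] at h2
  have h3 : x ≫ l.f n = 0 := by
    have h4 := congr(x ≫ $h2)
    rw [reassoc_of% hx, zero_comp] at h4
    simpa [← Category.assoc, Preadditive.IsIso.comp_right_eq_zero] using h4
  rw [← cancel_mono j, zero_comp, Category.assoc, ← h1, reassoc_of% h3, zero_comp]

end Spheres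

section F2

variable {𝒢 : Type u} [Category.{v} 𝒢] [Abelian 𝒢] [IsGrothendieckAbelian.{v} 𝒢] {𝓐 𝓑 : Set 𝒢}

lemma exists_acyclic (hpair : IsCompleteCotorsionPair 𝓐 𝓑) (X : CochainComplex 𝒢 ℤ) :
    ∃ (E P : CochainComplex 𝒢 ℤ) (i : X ⟶ E) (p : E ⟶ P), SES i p ∧ E.Acyclic ∧
      ∀ V ∈ Tilde 𝓑, Ext1Zero P V := by
  obtain ⟨B, A, b, a, w, h, hB, hA⟩ := hpair.approx₂ (separator 𝒢)
  have := h.epi_g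
  dsimp at this
  obtain ⟨E, P, i, p, hs, h1, h2⟩ := soa (D := CochainComplex 𝒢 ℤ) (ι := ULift.{v} ℤ)
    (fun n => sphDsk n.down A) (fun n => (ses_sph n.down A).mono) X
  refine ⟨E, P, i, p, hs, ?_, ?_⟩
  · refine acyclic_of_succ fun n => ?_
    rw [exactAt_iff_pOpcycles]
    intro T x hx
    apply (isSeparator_separator 𝒢).def
    intro g
    rw [← cancel_epi a]
    obtain ⟨y, hy⟩ := sph_lift (n := n) (A := A) (h1 ⟨n⟩) (a ≫ g ≫ x) (by simp [hx])
    simp only [comp_zero]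
    rw [← Category.assoc, ← Category.assoc, Category.assoc a, ← hy]
    simp
  · intro V hV
    refine h2 V fun k => ?_
    have := (ses_sph k.down A).mono
    have hc := ses_cokernel (sphDsk k.down A)
    have h4 := ext1Zero_sph (𝓐 := 𝓐) (𝓑 := 𝓑)
      (fun A hA B hB => cotorsion_ext1Zero hpair.toIsCotorsionPair hA hB) hA k.down hV
    refine h4.of_iso_left ?_
    exact IsColimit.coconePointUniqueUpToIso
      ((ses_sph k.down A).choose_spec.gIsCokernel) (colimit.isColimit _)

end F2

end CotAux


namespace CotAux

section Gen

variable {D : Type u} [Category.{v} D] [Abelian D] [IsGrothendieckAbelian.{v} D]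
  {T M E : D} (p : M ⟶ E)

/-- The subobject of `E` generated by a set of maps `T ⟶ M`. -/
noncomputable abbrev YO (S : Set (T ⟶ M)) : D :=
  image (Sigma.desc (fun s : S => s.1 ≫ p) : (∐ fun _ : S => T) ⟶ E)

/-- the inclusion -/
noncomputable def yι (S : Set (T ⟶ M)) : YO p S ⟶ E :=
  image.ι (Sigma.desc (fun s : S => s.1 ≫ p) : (∐ fun _ : S => T) ⟶ E)

instance (S : Set (T ⟶ M)) : Mono (yι p S) := by
  unfold yι; infer_instance

/-- the generators -/
noncomputable def yg {S : Set (T ⟶ M)} (s : S) : T ⟶ YO p S :=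
  Sigma.ι (fun _ : S => T) s ≫
    factorThruImage (Sigma.desc (fun s : S => s.1 ≫ p) : (∐ fun _ : S => T) ⟶ E)

lemma yg_yι {S : Set (T ⟶ M)} (s : S) : yg p s ≫ yι p S = s.1 ≫ p := by
  simp [yg, yι]

lemma y_ext {S : Set (T ⟶ M)} {W : D} {a b : YO p S ⟶ W} (h : ∀ s, yg p s ≫ a = yg p s ≫ b) :
    a = b := by
  have : Epi (factorThruImage (Sigma.desc (fun s : S => s.1 ≫ p) : (∐ fun _ : S => T) ⟶ E)) :=
    inferInstance
  refine this.left_cancellation _ _ (Sigma.hom_ext _ _ fun s => ?_)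
  simpa [yg] using h s

lemma y_desc {S : Set (T ⟶ M)} {N : D} (θ : N ⟶ E) [Mono θ]
    (h : ∀ s ∈ S, ∃ l : T ⟶ N, l ≫ θ = s ≫ p) : ∃ l : YO p S ⟶ N, l ≫ θ = yι p S := by
  refine (ses_cokernel θ).lift _ (y_ext p fun s => ?_)
  obtain ⟨l, hl⟩ := h s.1 s.2
  rw [← Category.assoc, yg_yι, ← hl]
  simp

/-- transition maps -/
noncomputable def yr {S S' : Set (T ⟶ M)} (h : S ⊆ S') : YO p S ⟶ YO p S' :=
  (y_desc p (yι p S') (fun s hs => ⟨yg p ⟨s, h hs⟩, yg_yι p _⟩)).choose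

lemma yr_yι {S S' : Set (T ⟶ M)} (h : S ⊆ S') : yr p h ≫ yι p S' = yι p S :=
  (y_desc p (yι p S') (fun s hs => ⟨yg p ⟨s, h hs⟩, yg_yι p _⟩)).choose_spec

/-- the diagram of a monotone family of sets -/
noncomputable def yF {J : Type v} [Preorder J] (S : J → Set (T ⟶ M)) (hS : Monotone S) : J ⥤ D where
  obj j := YO p (S j)
  map f := yr p (hS f.le)
  map_id j := by rw [← cancel_mono (yι p _), yr_yι]; simp
  map_comp f g := by rw [← cancel_mono (yι p _)]; simp [yr_yι]

/-- A filtered colimit of monomorphisms to a fixed object is mono. -/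
lemma mono_colim {J : Type v} [SmallCategory J] [IsFiltered J] {F : J ⥤ D} {c : Cocone F}
    (hc : IsColimit c) {W : D} (f : c.pt ⟶ W) (h : ∀ j, Mono (leg c j ≫ f)) : Mono f := by
  apply Preadditive.mono_of_cancel_zero
  intro T x hx
  refine colim_local hc x x fun j S s y hy => ?_
  have hy' : s ≫ x = y ≫ leg c j := hy
  have : y = 0 := by
    have := h j
    rw [← cancel_mono (leg c j ≫ f), ← Category.assoc, ← hy']
    simp [hx]
  rw [hy', this, zero_comp]

lemma y_colim {J : Type v} [Preorder J] [IsFiltered J] (S : J → Set (T ⟶ M)) (hS : Monotone S)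
    {S' : Set (T ⟶ M)} (hS' : S' = ⋃ j, S j) :
    Nonempty (colimit (yF p S hS) ≅ YO p S') := by
  have hsub : ∀ j, S j ⊆ S' := fun j => by rw [hS']; exact Set.subset_iUnion S j
  let c : Cocone (yF p S hS) :=
    { pt := YO p S'
      ι := { app := fun j => yr p (hsub j)
             naturality := fun j k f => by
              rw [← cancel_mono (yι p _)]
              simp [yF, yr_yι] } }
  let f : colimit (yF p S hS) ⟶ YO p S' := colimit.desc _ c
  let u : ∀ j, YO p (S j) ⟶ colimit (yF p S hS) := fun j => colimit.ι (yF p S hS) j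
  have hf : ∀ j, u j ≫ f = yr p (hsub j) := fun j => colimit.ι_desc _ _
  have hm : Mono f := by
    refine mono_colim (colimit.isColimit (yF p S hS)) _ fun j => ?_
    change Mono (u j ≫ f)
    rw [hf]
    have : Mono (yι p (S j)) := inferInstance
    exact mono_of_mono_fac (yr_yι p (hsub j))
  have he : Epi f := by
    apply Preadditive.epi_of_cancel_zero
    intro W g hg
    apply y_ext p
    rintro ⟨s, hs⟩
    have hs2 := hs
    rw [hS', Set.mem_iUnion] at hs2
    obtain ⟨j, hj⟩ := hs2
    have : yg p (⟨s, hs⟩ : S') = yg p (⟨s, hj⟩ : S j) ≫ yr p (hsub j) := by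
      rw [← cancel_mono (yι p _), Category.assoc, yr_yι, yg_yι, yg_yι]
    rw [this, ← hf, Category.assoc, Category.assoc, hg]
    simp
  have := isIso_of_mono_of_epi f
  exact ⟨asIso f⟩

lemma y_univ [Epi p] (hT : IsSeparator T) : IsIso (yι p (Set.univ : Set (T ⟶ M))) := by
  have : Epi (yι p (Set.univ : Set (T ⟶ M))) := by
    apply Preadditive.epi_of_cancel_zero
    intro W g hg
    rw [← cancel_epi p]
    apply hT.def
    intro h
    have := congr(yg p (⟨h, trivial⟩ : (Set.univ : Set (T ⟶ M))) ≫ $hg)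
    rw [← Category.assoc, yg_yι] at this
    simpa using this
  exact isIso_of_mono_of_epi _

end Gen

end CotAux


namespace CotAux

section Gen2

variable {D : Type u} [Category.{v} D] [Abelian D]

lemma exists_mono_coker {A E : D} (d : A ⟶ E) :
    ∃ q : cokernel (kernelSubobject d).arrow ⟶ E, Mono q ∧ cokernel.π _ ≫ q = d := by
  refine ⟨cokernel.desc _ d (by simp), ?_, by simp⟩
  apply Preadditive.mono_of_cancel_zero
  intro T x hx
  obtain ⟨T', π, _, y, hy⟩ := surjective_up_to_refinements_of_epi
    (cokernel.π (kernelSubobject d).arrow) x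
  have hyd : y ≫ d = 0 := by
    have := congr($hy ≫ cokernel.desc (kernelSubobject d).arrow d (by simp))
    simpa [hx] using this.symm
  rw [← cancel_epi π, hy, ← factorThruKernelSubobject_comp_arrow d y hyd, Category.assoc,
    cokernel.condition, comp_zero, comp_zero]

variable [IsGrothendieckAbelian.{v} D] {T M E : D} (p : M ⟶ E)

lemma y_iso {K : Type v} (f : K → (T ⟶ M)) {L : D} (π : (∐ fun _ : K => T) ⟶ L) [Epi π]
    (b : L ⟶ E) [Mono b] (h : π ≫ b = Sigma.desc (fun k => f k ≫ p)) :
    ∃ θ : L ≅ YO p (Set.range f), θ.hom ≫ yι p (Set.range f) = b := by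
  obtain ⟨l, hl⟩ := (ses_cokernel (yι p (Set.range f))).lift b (by
    rw [← cancel_epi π, reassoc_of% h, comp_zero]
    refine Sigma.hom_ext _ _ fun k => ?_
    have := yg_yι p (⟨f k, ⟨k, rfl⟩⟩ : Set.range f)
    simp only [colimit.ι_desc_assoc, Cofan.mk_ι_app, comp_zero]
    dsimp at this
    rw [← this]
    simp)
  obtain ⟨l', hl'⟩ := y_desc p (S := Set.range f) b (by
    rintro _ ⟨k, rfl⟩
    refine ⟨Sigma.ι (fun _ : K => T) k ≫ π, ?_⟩
    rw [Category.assoc, h]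
    simp)
  refine ⟨⟨l, l', ?_, ?_⟩, hl⟩
  · rw [← cancel_mono b]; simp [hl, hl']
  · rw [← cancel_mono (yι p _)]; simp [hl, hl']

end Gen2

section Step

variable {𝒢 : Type u} [Category.{v} 𝒢] [Abelian 𝒢] [IsGrothendieckAbelian.{v} 𝒢]

lemma HZero.precomp {X Y Z : CochainComplex 𝒢 ℤ} (g : X ⟶ Y) {f : Y ⟶ Z} {n : ℤ} (h : HZero f n) :
    HZero (g ≫ f) n := by
  intro T x hx
  have := h T (x ≫ g.f n) (by rw [Category.assoc, HomologicalComplex.Hom.comm, reassoc_of% hx, zero_comp])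
  simpa using this

lemma HZero.postcomp {X Y Z : CochainComplex 𝒢 ℤ} {f : X ⟶ Y} (g : Y ⟶ Z) {n : ℤ} (h : HZero f n) :
    HZero (f ≫ g) n := by
  intro T x hx
  have := congr($(h T x hx) ≫ HomologicalComplex.opcyclesMap g n)
  simpa using this

lemma HZero_of_cycles {X Y : CochainComplex 𝒢 ℤ} {f : X ⟶ Y} {n : ℤ}
    (h : X.iCycles n ≫ f.f n ≫ Y.pOpcycles n = 0) : HZero f n := by
  intro T x hx
  have := congr(X.liftCycles x (n + 1) (by simp) hx ≫ $h)
  simpa using this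

/-- The condition used to select finitely many generators. -/
def SelCond {T M E : CochainComplex 𝒢 ℤ} (p : M ⟶ E) {K : Type v} (f : K → (T ⟶ M))
    (U : Subobject (∐ fun _ : K => T)) (n : ℤ) (W : Subobject ((cokernel U.arrow).cycles n))
    (F : Finset (T ⟶ M)) : Prop :=
  ∃ q : cokernel U.arrow ⟶ YO p (Set.range f ∪ F),
    cokernel.π U.arrow ≫ q ≫ yι p _ = Sigma.desc (fun k => f k ≫ p) ∧
    kernelSubobject ((cokernel U.arrow).iCycles n ≫ q.f n ≫
      HomologicalComplex.pOpcycles _ n) = W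

/-- The new index type. -/
def NextK (T : CochainComplex 𝒢 ℤ) (K : Type v) : Type v :=
  K ⊕ (Σ (U : Shrink.{v} (Subobject (∐ fun _ : K => T))) (n : ULift.{v} ℤ)
    (_ : Shrink.{v} (Subobject ((cokernel ((equivShrink _).symm U).arrow).cycles n.down))),
      ULift.{v} ℕ)

open Classical in
lemma step (T : CochainComplex 𝒢 ℤ) (hT : IsSeparator T) (K : Type v) {M E : CochainComplex 𝒢 ℤ}
    (p : M ⟶ E) [Epi p] (hE : E.Acyclic) (f : K → (T ⟶ M)) :
    ∃ (f' : NextK T K → (T ⟶ M)) (h : Set.range f ⊆ Set.range f'), ∀ n, HZero (yr p h) n := by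
  have h1 : ∀ U n W, ∃ F, (∃ F', SelCond p f U n W F') → SelCond p f U n W F := by
    intro U n W
    by_cases h : ∃ F', SelCond p f U n W F'
    · exact ⟨h.choose, fun _ => h.choose_spec⟩
    · exact ⟨∅, fun h' => (h h').elim⟩
  choose F hF using h1
  let f' : NextK T K → (T ⟶ M) := Sum.elim f (fun z =>
    ((F _ _ ((equivShrink _).symm z.2.2.1)).toList[z.2.2.2.down]?).getD 0)
  have hsub : Set.range f ⊆ Set.range f' := by
    rintro _ ⟨k, rfl⟩
    exact ⟨Sum.inl k, rfl⟩
  have hFsub : ∀ U n W, (F U n W : Set (T ⟶ M)) ⊆ Set.range f' := by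
    intro U n W x hx
    obtain ⟨U, rfl⟩ := (equivShrink _).symm.surjective U
    obtain ⟨W, rfl⟩ := (equivShrink _).symm.surjective W
    have hx' : x ∈ (F ((equivShrink _).symm U) n ((equivShrink _).symm W)).toList := by
      simpa using hx
    obtain ⟨i, hi⟩ := List.mem_iff_getElem?.1 hx'
    refine ⟨Sum.inr ⟨U, ⟨n⟩, W, ⟨i⟩⟩, ?_⟩
    simp [f', hi]
  refine ⟨f', hsub, fun n => ?_⟩
  let d : (∐ fun _ : K => T) ⟶ E := Sigma.desc (fun k => f k ≫ p)
  let U := kernelSubobject d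
  obtain ⟨q, hq, hqd⟩ := exists_mono_coker d
  obtain ⟨θ, hθ⟩ := y_iso p f (cokernel.π U.arrow) q hqd
  suffices HZero (θ.hom ≫ yr p hsub) n by
    have := this.precomp θ.inv
    simpa using this
  apply HZero_of_cycles
  obtain ⟨n, rfl⟩ : ∃ k, n = k + 1 := ⟨n - 1, by simp⟩
  let SF : Finset (T ⟶ M) → Set (T ⟶ M) := fun A => Set.range f ∪ A
  have hSF : Monotone SF := fun A B h => Set.union_subset_union_right _ (by exact_mod_cast h)
  have hUn : (Set.univ : Set (T ⟶ M)) = ⋃ A, SF A := by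
    symm
    rw [Set.eq_univ_iff_forall]
    intro x
    exact Set.mem_iUnion.2 ⟨{x}, Or.inr (by simp)⟩
  obtain ⟨e1⟩ := y_colim p SF hSF hUn
  have := y_univ p hT
  have hex : (colimit (yF p SF hSF)).Acyclic :=
    acyclic_of_iso (e1 ≪≫ asIso (yι p (Set.univ : Set (T ⟶ M)))).symm hE
  have hsub2 : ∀ A, Set.range f ⊆ SF A := fun A => Set.subset_union_left
  refine colim_kill (colimit.isColimit (yF p SF hSF)) (j₀ := (∅ : Finset (T ⟶ M))) (hex (n + 1))
    ((cokernel U.arrow).iCycles (n + 1) ≫ (θ.hom ≫ yr p (hsub2 ∅)).f (n + 1)) ?_ _ ?_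
  · exact (by rw [Category.assoc, HomologicalComplex.Hom.comm]; simp :
      ((cokernel U.arrow).iCycles (n + 1) ≫ (θ.hom ≫ yr p (hsub2 ∅)).f (n + 1)) ≫
        HomologicalComplex.d _ (n + 1) (n + 1 + 1) = 0)
  · intro A hA S s hs
    replace hs : s ≫ ((cokernel U.arrow).iCycles (n + 1) ≫ (θ.hom ≫ yr p (hsub2 ∅)).f (n + 1)) ≫
      (yr p (hSF hA.le)).f (n + 1) ≫ (YO p (SF A)).pOpcycles (n + 1) = 0 := hs
    have hcomp : (yr p (hsub2 ∅)).f (n + 1) ≫ (yr p (hSF hA.le)).f (n + 1) =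
        (yr p (hsub2 A)).f (n + 1) := by
      rw [← HomologicalComplex.comp_f]
      congr 1
      rw [← cancel_mono (yι p _)]
      simp [yr_yι]
    let W := kernelSubobject ((cokernel U.arrow).iCycles (n + 1) ≫
      (θ.hom ≫ yr p (hsub2 A)).f (n + 1) ≫ (YO p (SF A)).pOpcycles (n + 1))
    have hsel : SelCond p f U (n + 1) W A :=
      ⟨θ.hom ≫ yr p (hsub2 A), by rw [Category.assoc, yr_yι, hθ, hqd], rfl⟩
    obtain ⟨q', hq', hW⟩ := hF U (n + 1) W ⟨A, hsel⟩
    have hsW : W.Factors s := by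
      rw [kernelSubobject_factors_iff]
      rw [← hs]
      simp [reassoc_of% hcomp]
    rw [← hW, kernelSubobject_factors_iff] at hsW
    have hsub3 : Set.range f ∪ (F U (n + 1) W : Set (T ⟶ M)) ⊆ Set.range f' :=
      Set.union_subset hsub (hFsub _ _ _)
    have hqe : q' ≫ yr p hsub3 = θ.hom ≫ yr p hsub := by
      rw [← cancel_mono (yι p _), ← cancel_epi (cokernel.π U.arrow)]
      rw [Category.assoc, Category.assoc, yr_yι, yr_yι, hθ, hqd, hq']
    have hfin := congr($hsW ≫ HomologicalComplex.opcyclesMap (yr p hsub3) (n + 1))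
    rw [← hqe]
    simpa using hfin

end Step

end CotAux


namespace CotAux

section GenZorn

variable {D : Type u} [Category.{v} D] [Abelian D] [IsGrothendieckAbelian.{v} D]

lemma gen_small {T M E : D} (p : M ⟶ E) {K : Type v} (e : K → (T ⟶ M)) :
    ∃ (U : Subobject (∐ fun _ : K => T)) (V : Subobject (cokernel U.arrow))
      (a : cokernel U.arrow ⟶ M) (b : cokernel V.arrow ⟶ E),
      Nonempty (cokernel V.arrow ≅ YO p (Set.range e)) ∧ Mono b ∧
        cokernel.π V.arrow ≫ b = a ≫ p := by
  obtain ⟨a, ha, ha'⟩ := exists_mono_coker (Sigma.desc e : (∐ fun _ : K => T) ⟶ M)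
  obtain ⟨b, hb, hb'⟩ := exists_mono_coker (a ≫ p)
  have hepi : Epi (cokernel.π (kernelSubobject (Sigma.desc e : (∐ fun _ : K => T) ⟶ M)).arrow ≫
    cokernel.π (kernelSubobject (a ≫ p)).arrow) := epi_comp _ _
  obtain ⟨θ, -⟩ := y_iso p e (cokernel.π _ ≫ cokernel.π (kernelSubobject (a ≫ p)).arrow) b (by
    rw [Category.assoc, hb', reassoc_of% ha']
    exact Sigma.hom_ext _ _ fun k => by simp)
  exact ⟨_, kernelSubobject (a ≫ p), a, b, ⟨θ⟩, hb, hb'⟩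

/-- A class of objects closed under the operations needed. -/
structure AcClass (Ac : D → Prop) : Prop where
  iso : ∀ {X Y : D}, (X ≅ Y) → Ac X → Ac Y
  mid : ∀ {X Y Z : D} {i : X ⟶ Y} {p : Y ⟶ Z}, SES i p → Ac X → Ac Z → Ac Y
  right : ∀ {X Y Z : D} {i : X ⟶ Y} {p : Y ⟶ Z}, SES i p → Ac X → Ac Y → Ac Z
  zero : ∀ {X : D}, IsZero X → Ac X
  colim : ∀ {J : Type v} [SmallCategory J] [IsFiltered J] (F : J ⥤ D),
    (∀ j, Ac (F.obj j)) → Ac (colimit F)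

lemma dir_bound {Ac : D → Prop} (hAc : AcClass Ac) {M E : D} (p : M ⟶ E) {J : Type v} [Preorder J]
    [IsDirectedOrder J] [Nonempty J] (N : J → Subobject M) (hN : Monotone N)
    (h : ∀ j, Ac (N j : D) ∧ Mono ((N j).arrow ≫ p)) :
    ∃ N' : Subobject M, (Ac (N' : D) ∧ Mono (N'.arrow ≫ p)) ∧ ∀ j, N j ≤ N' := by
  have : IsFiltered J := isFiltered_of_directed_le_nonempty _
  let F : J ⥤ D :=
    { obj := fun j => (N j : D)
      map := fun f => Subobject.ofLE _ _ (hN f.le)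
      map_id := fun j => by simp
      map_comp := fun f g => by simp }
  let cc : Cocone F :=
    { pt := M
      ι := { app := fun j => (N j).arrow
             naturality := fun j k f => by simp [F] } }
  let L := colimit F
  let u : ∀ j, (N j : D) ⟶ L := fun j => colimit.ι F j
  let a : L ⟶ M := colimit.desc F cc
  have hu : ∀ j, u j ≫ a = (N j).arrow := fun j => colimit.ι_desc cc j
  have ha : Mono a := mono_colim (colimit.isColimit F) a (fun j => by
    change Mono (u j ≫ a)
    rw [hu]
    infer_instance)
  have hap : Mono (a ≫ p) := mono_colim (colimit.isColimit F) (a ≫ p) (fun j => by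
    change Mono (u j ≫ a ≫ p)
    rw [reassoc_of% (hu j)]
    exact (h j).2)
  have hL : Ac L := hAc.colim F fun j => (h j).1
  refine ⟨Subobject.mk a, ⟨hAc.iso (Subobject.underlyingIso a).symm hL, ?_⟩, fun j => ?_⟩
  · rw [← Subobject.underlyingIso_hom_comp_eq_mk, Category.assoc]
    exact mono_comp _ _
  · exact Subobject.le_mk_of_comm (u j) (hu j)

lemma chain_bound {Ac : D → Prop} (hAc : AcClass Ac) {M E : D} (p : M ⟶ E)
    (c : Set (Subobject M)) (hc : IsChain (· ≤ ·) c) (hne : c.Nonempty)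
    (h : ∀ N ∈ c, Ac (N : D) ∧ Mono (N.arrow ≫ p)) :
    ∃ N : Subobject M, (Ac (N : D) ∧ Mono (N.arrow ≫ p)) ∧ ∀ z ∈ c, z ≤ N := by
  let e : Shrink.{v} c ≃ c := (equivShrink c).symm
  let N : Shrink.{v} c → Subobject M := fun j => (e j).1
  let pre : Preorder (Shrink.{v} c) := Preorder.lift N
  have hdir : @IsDirectedOrder (Shrink.{v} c) pre.toLE := @IsDirected.mk _ _ (fun a b => by
    rcases hc.total (e a).2 (e b).2 with h | h
    · exact ⟨b, h, le_refl (N b)⟩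
    · exact ⟨a, le_refl (N a), h⟩)
  have hne' : Nonempty (Shrink.{v} c) := ⟨e.symm ⟨_, hne.choose_spec⟩⟩
  obtain ⟨N', h1, h2⟩ := @dir_bound D _ _ _ Ac hAc M E p (Shrink.{v} c) pre hdir hne' N
    (fun a b hab => hab) (fun j => h _ (e j).2)
  refine ⟨N', h1, fun z hz => ?_⟩
  have := h2 (e.symm ⟨z, hz⟩)
  simpa [N] using this

/-- quotient of an extension by a subobject mapping monomorphically to the base -/
lemma quot_ses {I M U N : D} {i : I ⟶ M} {p : M ⟶ U} (hs : SES i p) (n : N ⟶ M) [Mono n]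
    (hn : Mono (n ≫ p)) : ∃ (M' E' : D) (q : M ⟶ M') (r : U ⟶ E') (p' : M' ⟶ E'),
      SES n q ∧ SES (n ≫ p) r ∧ SES (i ≫ q) p' ∧ q ≫ p' = p ≫ r := by
  have hsN := ses_cokernel n
  have hsE := ses_cokernel (n ≫ p)
  revert hsN hsE
  generalize cokernel.π n = q
  generalize cokernel.π (n ≫ p) = r
  intro hsN hsE
  have := hs.epi
  have := hs.mono
  have := hsE.epi
  have := hsN.epi
  obtain ⟨p', hqp⟩ := hsN.desc (p ≫ r) (by rw [← Category.assoc]; exact hsE.w)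
  have hep : Epi p' := by
    have : Epi (q ≫ p') := by rw [hqp]; exact epi_comp _ _
    exact epi_of_epi q p'
  have hm : Mono (i ≫ q) := by
    apply Preadditive.mono_of_cancel_zero
    intro Z' z hz
    obtain ⟨l, hl⟩ := hsN.lift (z ≫ i) (by simpa using hz)
    have : l = 0 := by
      rw [← cancel_mono (n ≫ p), reassoc_of% hl, hs.w]
      simp
    rw [← cancel_mono i, ← hl, this]
    simp
  have hs2 : SES (i ≫ q) p' := by
    refine SES.of_desc (by rw [Category.assoc, hqp, reassoc_of% hs.w, zero_comp]) ?_
    intro W k hk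
    obtain ⟨l, hl⟩ := hs.desc (q ≫ k) (by simpa using hk)
    obtain ⟨l', hl'⟩ := hsE.desc l (by
      rw [Category.assoc, hl, ← Category.assoc, hsN.w, zero_comp])
    refine ⟨l', ?_⟩
    rw [← cancel_epi q, reassoc_of% hqp, hl', hl]
  exact ⟨_, _, q, r, p', hsN, hsE, hs2, hqp⟩

lemma k3 {Ac : D → Prop} (hAc : AcClass Ac) {ι : Type v} {s t : ι → D} (m : ∀ i, s i ⟶ t i)
    (hm : ∀ i, Mono (m i))
    (hsmall : ∀ {M E : D} (p : M ⟶ E), Epi p → Ac E → ¬ IsZero E →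
      ∃ (k : ι) (a : t k ⟶ M) (b : cokernel (m k) ⟶ E), Ac (cokernel (m k)) ∧
        ¬ IsZero (cokernel (m k)) ∧ Mono b ∧ cokernel.π (m k) ≫ b = a ≫ p)
    {I : D} (hI : ∀ k (f : s k ⟶ I), ∃ g, m k ≫ g = f) {U : D} (hU : Ac U) : Ext1Zero U I := by
  refine Ext1Zero.of_section (fun {M i p} hs => ?_)
  obtain ⟨N, -, hN⟩ := zorn_le_nonempty₀
    {N : Subobject M | Ac (N : D) ∧ Mono (N.arrow ≫ p)}
    (fun c hcs hc y hy => chain_bound hAc p c hc ⟨y, hy⟩ hcs) ⊥ (by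
      have hz : IsZero ((⊥ : Subobject M) : D) :=
        (isZero_zero _).of_iso Subobject.botCoeIsoZero
      exact ⟨hAc.zero hz, ⟨fun _ _ _ => hz.eq_of_tgt _ _⟩⟩)
  obtain ⟨⟨hNa, hNm⟩, hmax⟩ := hN
  obtain ⟨M', E', q, r, p', hsN, hsE, hs2, hqp⟩ := quot_ses hs N.arrow hNm
  have hEa : Ac E' := hAc.right hsE hNa hU
  by_cases hE0 : IsZero E'
  · obtain ⟨σ, hσ⟩ := hsE.lift (𝟙 U) (hE0.eq_of_tgt _ _)
    exact ⟨σ ≫ N.arrow, by rw [Category.assoc, hσ]⟩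
  · exfalso
    obtain ⟨k, a, b, hV, hV0, hb, hab⟩ := hsmall p' hs2.epi hEa hE0
    obtain ⟨l, hl⟩ := hs2.lift (m k ≫ a) (by rw [Category.assoc, ← hab]; simp)
    obtain ⟨g, hg⟩ := hI k l
    let x : cokernel (m k) ⟶ M' := cokernel.desc _ (a - g ≫ i ≫ q) (by
      rw [Preadditive.comp_sub, reassoc_of% hg, hl, sub_self])
    have hx : x ≫ p' = b := by
      rw [← cancel_epi (cokernel.π (m k)), hab]
      simp only [x, cokernel.π_desc_assoc, Preadditive.sub_comp, Category.assoc, hqp]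
      rw [reassoc_of% hs.w]
      simp
    have hxm : Mono x := mono_of_mono_fac hx
    obtain ⟨Q, n', y, m', hQ, hn', hpb⟩ := ses_pullback_map hsN x
    have hm' : Mono m' := by
      exact MorphismProperty.IsStableUnderBaseChange.of_isPullback
        (P := MorphismProperty.monomorphisms _) hpb hxm
    have hmp : Mono (m' ≫ p) := by
      apply Preadditive.mono_of_cancel_zero
      intro Z z hz
      have hzy : z ≫ y = 0 := by
        rw [← cancel_mono b, zero_comp, ← hx, Category.assoc, reassoc_of% hpb.w, hqp]
        rw [reassoc_of% hz, zero_comp]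
      obtain ⟨z', hz'⟩ := hQ.lift z hzy
      have : z' = 0 := by
        rw [← cancel_mono (N.arrow ≫ p), zero_comp, ← hn', Category.assoc, reassoc_of% hz', hz]
      rw [← hz', this, zero_comp]
    have hle := hmax (y := Subobject.mk m')
      ⟨hAc.iso (Subobject.underlyingIso m').symm (hAc.mid hQ hNa hV), by
        rw [← Subobject.underlyingIso_hom_comp_eq_mk, Category.assoc]
        exact mono_comp _ _⟩
      (Subobject.le_mk_of_comm n' hn')
    have hmN : Subobject.ofMkLE m' N hle ≫ N.arrow = m' := by simp
    apply hV0
    have := hQ.epi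
    have hy0 : y = 0 := by
      rw [← cancel_mono x, hpb.w, ← hmN, Category.assoc, hsN.w]
      simp
    rw [IsZero.iff_id_eq_zero, ← cancel_epi y, hy0]
    simp

/-- pairs of a quotient of a coproduct and a subobject thereof -/
def PairSub (T : D) (K : Type v) : Type (max u v) :=
  Σ U : Subobject (∐ fun _ : K => T), Subobject (cokernel U.arrow)

instance (T : D) (K : Type v) : Small.{v} (PairSub T K) := by
  unfold PairSub
  infer_instance

lemma exists_pairs (Ac : D → Prop) (T : D) (K : Type v) :
    ∃ (ι : Type v) (z : ι → PairSub T K), (∀ k, Ac (cokernel (z k).2.arrow)) ∧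
      ∀ x : PairSub T K, Ac (cokernel x.2.arrow) → ∃ k, z k = x := by
  refine ⟨{k : Shrink.{v} (PairSub T K) // Ac (cokernel ((equivShrink _).symm k).2.arrow)},
    fun k => (equivShrink _).symm k.1, fun k => k.2, fun x hx => ⟨⟨equivShrink _ x, ?_⟩, ?_⟩⟩
  · rw [Equiv.symm_apply_apply]
    exact hx
  · exact Equiv.symm_apply_apply _ _

/-- the abstract form of the existence of enough K-injectives -/
lemma exists_inj {Ac : D → Prop} (hAc : AcClass Ac) (T : D) (K : Type v)
    (hsm : ∀ {M E : D} (p : M ⟶ E), Epi p → Ac E → ¬ IsZero E →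
      ∃ e : K → (T ⟶ M), Ac (YO p (Set.range e)) ∧ ¬ IsZero (YO p (Set.range e))) (X : D) :
    ∃ (I E : D) (i : X ⟶ I) (p : I ⟶ E), SES i p ∧
      (∀ W, (∀ V, Ac V → Ext1Zero V W) → Ext1Zero E W) ∧ ∀ U, Ac U → Ext1Zero U I := by
  obtain ⟨ι, z, hz, hsurj⟩ := exists_pairs Ac T K
  obtain ⟨I, P, i, p, hs, h1, h2⟩ := soa (fun k : ι => (z k).2.arrow)
    (fun k => inferInstance) X
  refine ⟨I, P, i, p, hs, fun W hW => h2 W fun k => hW _ (hz k), fun U hU =>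
    k3 hAc (fun k : ι => (z k).2.arrow) (fun k => inferInstance) ?_ h1 hU⟩
  intro M E p hp hE hE0
  obtain ⟨f, hf, hf0⟩ := hsm p hp hE hE0
  obtain ⟨U, V, a, b, ⟨θ⟩, hb, hab⟩ := gen_small p f
  obtain ⟨k, hk⟩ := hsurj ⟨U, V⟩ (hAc.iso θ.symm hf)
  refine ⟨k, ?_⟩
  rw [hk]
  exact ⟨a, b, hAc.iso θ.symm hf, fun h => hf0 (h.of_iso θ.symm), hb, hab⟩

end GenZorn

section Small

variable {𝒢 : Type u} [Category.{v} 𝒢] [Abelian 𝒢] [IsGrothendieckAbelian.{v} 𝒢]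

/-- The sequence of index types. -/
def Kseq (T : CochainComplex 𝒢 ℤ) : ℕ → Type v
  | 0 => PUnit
  | k + 1 => NextK T (Kseq T k)

/-- The final index type. -/
def KOm (T : CochainComplex 𝒢 ℤ) : Type v := Σ k : ℕ, Kseq T k

lemma exists_small {T : CochainComplex 𝒢 ℤ} (hT : IsSeparator T) {M E : CochainComplex 𝒢 ℤ}
    (p : M ⟶ E) [Epi p] (hE : E.Acyclic) (hE0 : ¬ IsZero E) :
    ∃ e : KOm T → (T ⟶ M), (YO p (Set.range e)).Acyclic ∧ ¬ IsZero (YO p (Set.range e)) := by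
  obtain ⟨t, ht⟩ : ∃ t : T ⟶ M, t ≫ p ≠ 0 := by
    by_contra! h
    have : p = 0 := hT.def _ _ (fun t => by rw [h t, comp_zero])
    apply hE0
    rw [IsZero.iff_id_eq_zero, ← cancel_epi p, this]
    simp
  let fs : ∀ k, Kseq T k → (T ⟶ M) := fun k => Nat.rec (motive := fun k => Kseq T k → (T ⟶ M))
    (fun _ => t) (fun k f => (step T hT (Kseq T k) p hE f).choose) k
  have hfs : ∀ k, ∃ (h : Set.range (fs k) ⊆ Set.range (fs (k + 1))), ∀ n, HZero (yr p h) n :=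
    fun k => (step T hT (Kseq T k) p hE (fs k)).choose_spec
  let e : KOm T → (T ⟶ M) := fun z => fs z.1 z.2
  let S : ULift.{v} ℕ → Set (T ⟶ M) := fun k => Set.range (fs k.down)
  have hS : Monotone S := fun a b hab =>
    monotone_nat_of_le_succ (f := fun k => Set.range (fs k)) (fun k => (hfs k).choose) hab
  have hU : Set.range e = ⋃ k, S k := by
    ext x
    simp only [Set.mem_range, Set.mem_iUnion, S, e]
    constructor
    · rintro ⟨⟨k, y⟩, hy⟩
      exact ⟨⟨k⟩, y, hy⟩
    · rintro ⟨⟨k⟩, y, hy⟩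
      exact ⟨⟨k, y⟩, hy⟩
  have : IsDirectedOrder (ULift.{v} ℕ) :=
    ⟨fun a b => ⟨⟨max a.down b.down⟩, le_max_left a.down b.down, le_max_right a.down b.down⟩⟩
  have : IsFiltered (ULift.{v} ℕ) := isFiltered_of_directed_le_nonempty _
  obtain ⟨θ⟩ := y_colim p S hS hU
  refine ⟨e, acyclic_of_iso θ fun n => ?_, fun h0 => ?_⟩
  · refine colim_exactAt (colimit.isColimit (yF p S hS)) n fun j => ?_
    refine ⟨⟨j.down + 1⟩, homOfLE (Nat.le_succ j.down), (hfs j.down).choose_spec n⟩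
  · apply ht
    have := yg_yι p (⟨t, ⟨⟨0, PUnit.unit⟩, rfl⟩⟩ : Set.range e)
    dsimp at this
    rw [← this, h0.eq_of_tgt (yg p _) 0, zero_comp]
lemma acClass_acyclic :
    AcClass (fun E : CochainComplex 𝒢 ℤ => E.Acyclic) where
  iso θ h := acyclic_of_iso θ h
  mid h h₁ h₂ := acyclic_mid h h₁ h₂
  right h h₁ h₂ := acyclic_right h h₁ h₂
  zero {X} hz := fun n => by
    rw [exactAt_iff_pOpcycles]
    intro T x _
    have hzn : IsZero (X.X n) :=
      (HomologicalComplex.eval 𝒢 (ComplexShape.up ℤ) n).map_isZero hz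
    rw [hzn.eq_of_tgt x 0, zero_comp]
  colim F h := fun n => colim_exactAt (colimit.isColimit F) n fun j => by
    refine ⟨j, 𝟙 j, ?_⟩
    rw [F.map_id]
    intro T x hx
    have := (exactAt_iff_pOpcycles _ n).1 (h j n) T x hx
    rw [HomologicalComplex.id_f, Category.id_comp]
    exact this

/-- F1 -/
lemma exists_kinj (X : CochainComplex 𝒢 ℤ) :
    ∃ (I E : CochainComplex 𝒢 ℤ) (i : X ⟶ I) (p : I ⟶ E), SES i p ∧ E.Acyclic ∧
      ∀ U : CochainComplex 𝒢 ℤ, U.Acyclic → Ext1Zero U I := by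
  obtain ⟨T, hT⟩ : ∃ T : CochainComplex 𝒢 ℤ, IsSeparator T :=
    ⟨separator _, isSeparator_separator _⟩
  obtain ⟨I, P, i, p, hs, h1, h2⟩ := exists_inj acClass_acyclic T (KOm T)
    (fun p hp hE hE0 => exists_small hT p hE hE0) X
  refine ⟨I, P, i, p, hs, ?_, h2⟩
  exact acyclic_of_ext1Zero_sph fun m Q _ => h1 _ fun V hV => ext1Zero_acyclic_sph hV m Q

end Small

end CotAux


namespace CotAux

section Assembly

variable {𝒢 : Type u} [Category.{v} 𝒢] [Abelian 𝒢] [IsGrothendieckAbelian.{v} 𝒢] [HasExt.{w} 𝒢]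
  {𝓐 𝓑 : Set 𝒢}

lemma tilde_ext (hpair : IsCompleteCotorsionPair 𝓐 𝓑) {U V : CochainComplex 𝒢 ℤ}
    (hU : U ∈ Tilde 𝓐) (hV : V ∈ Tilde 𝓑) : Ext1Zero U V :=
  ext1Zero_tilde (fun _ hA _ hB => cotorsion_ext1Zero hpair.toIsCotorsionPair hA hB) hU hV

lemma main_i1 (hpair : IsCompleteCotorsionPair 𝓐 𝓑) (hher : IsHereditary 𝓐 𝓑)
    (X : CochainComplex 𝒢 ℤ) :
    ∃ (B P : CochainComplex 𝒢 ℤ) (i : X ⟶ B) (p : B ⟶ P), SES i p ∧ B ∈ Tilde 𝓑 ∧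
      ∀ V ∈ Tilde 𝓑, Ext1Zero P V := by
  obtain ⟨E, P, i, p, hs, hE, hP⟩ := exists_acyclic hpair X
  obtain ⟨B, A, b, a, hs', hB, hA⟩ := exists_tilde_right hpair hher hE
  obtain ⟨Q, q, s, t, h1, h2, -⟩ := ses_comp_mono hs hs'
  exact ⟨B, Q, i ≫ b, q, h1, hB, fun V hV => Ext1Zero.ext_left h2 (hP V hV) (tilde_ext hpair hA hV)⟩

lemma main_i2 (hpair : IsCompleteCotorsionPair 𝓐 𝓑) (hher : IsHereditary 𝓐 𝓑)
    (X : CochainComplex 𝒢 ℤ) :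
    ∃ (B P : CochainComplex 𝒢 ℤ) (i : B ⟶ P) (p : P ⟶ X), SES i p ∧ B ∈ Tilde 𝓑 ∧
      ∀ V ∈ Tilde 𝓑, Ext1Zero P V := by
  obtain ⟨A0, f, hf, hA0⟩ := exists_epi_tilde hpair X
  obtain ⟨B, P, i, p, hs, hB, hP⟩ := main_i1 hpair hher (kernel f)
  obtain ⟨P', b', x', p', a', h1, h2, -⟩ := ses_pushout (ses_kernel f) hs
  exact ⟨B, P', b', x', h1, hB, fun V hV => Ext1Zero.ext_left h2 (tilde_ext hpair hA0 hV) (hP V hV)⟩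

lemma main_ii1 (hpair : IsCompleteCotorsionPair 𝓐 𝓑) (hher : IsHereditary 𝓐 𝓑)
    (X : CochainComplex 𝒢 ℤ) :
    ∃ (F A : CochainComplex 𝒢 ℤ) (i : X ⟶ F) (p : F ⟶ A), SES i p ∧ A ∈ Tilde 𝓐 ∧
      ∀ U ∈ Tilde 𝓐, Ext1Zero U F := by
  obtain ⟨I, E, i, p, hs, hE, hI⟩ := exists_kinj X
  obtain ⟨B, A, b, a, hs', hB, hA⟩ := exists_tilde_left hpair hher hE
  obtain ⟨F, x', a', b', e', h1, h2⟩ := ses_pullback hs hs'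
  exact ⟨F, A, x', a', h1, hA, fun U hU => Ext1Zero.ext_right h2 (tilde_ext hpair hU hB) (hI U hU.1)⟩

lemma main_ii2 (hpair : IsCompleteCotorsionPair 𝓐 𝓑) (hher : IsHereditary 𝓐 𝓑)
    (X : CochainComplex 𝒢 ℤ) :
    ∃ (F A : CochainComplex 𝒢 ℤ) (i : F ⟶ A) (p : A ⟶ X), SES i p ∧ A ∈ Tilde 𝓐 ∧
      ∀ U ∈ Tilde 𝓐, Ext1Zero U F := by
  obtain ⟨A0, f, hf, hA0⟩ := exists_epi_tilde hpair X
  obtain ⟨I, E, i, p, hs, hE, hI⟩ := exists_kinj (kernel f)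
  obtain ⟨P', b', x', p', a', h1, h2, -⟩ := ses_pushout (ses_kernel f) hs
  obtain ⟨B, A, b, a, hs', hB, hA⟩ := exists_tilde_left hpair hher (acyclic_mid h2 hA0.1 hE)
  obtain ⟨F, g, s, t, h3, h4⟩ := ses_comp_epi h1 hs'
  exact ⟨F, A, g, a ≫ x', h3, hA,
    fun U hU => Ext1Zero.ext_right h4 (tilde_ext hpair hU hB) (hI U hU.1)⟩

end Assembly

end CotAux


/-- Let `𝒢` be a Grothendieck abelian category (cocomplete abelian with exact filtered
colimits and a separator) and `(𝓐, 𝓑)` a complete hereditary cotorsion pair in `𝒢`.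
Then both induced pairs `(⊥(B̃), B̃)` and `(Ã, Ã^⊥)` in the category of cochain
complexes are complete cotorsion pairs: (i) every complex `X` admits short exact
sequences `0 → X → B_X → P_X → 0` and `0 → B^X → P^X → X → 0` with `B_X, B^X ∈ B̃` and
`Ext¹(P_X, V) = 0 = Ext¹(P^X, V)` for all `V ∈ B̃`; (ii) every complex `X` admits
short exact sequences `0 → X → F_X → A_X → 0` and `0 → F^X → A^X → X → 0` with
`A_X, A^X ∈ Ã` and `Ext¹(U, F_X) = 0 = Ext¹(U, F^X)` for all `U ∈ Ã`. -/
theorem stmt_14 [HasColimits 𝒢] [HasFilteredColimits 𝒢] [AB5 𝒢] [HasSeparator 𝒢]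
    [HasExt.{w} 𝒢] (𝓐 𝓑 : Set 𝒢)
    (hpair : IsCompleteCotorsionPair 𝓐 𝓑) (hher : IsHereditary 𝓐 𝓑) :
    ∀ X : CochainComplex 𝒢 ℤ,
      ((∃ (BX PX : CochainComplex 𝒢 ℤ) (i : X ⟶ BX) (p : BX ⟶ PX) (w : i ≫ p = 0),
          (ShortComplex.mk i p w).ShortExact ∧ BX ∈ Tilde 𝓑 ∧
          (∀ V ∈ Tilde 𝓑, Ext1Zero PX V)) ∧
       (∃ (BX PX : CochainComplex 𝒢 ℤ) (i : BX ⟶ PX) (p : PX ⟶ X) (w : i ≫ p = 0),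
          (ShortComplex.mk i p w).ShortExact ∧ BX ∈ Tilde 𝓑 ∧
          (∀ V ∈ Tilde 𝓑, Ext1Zero PX V))) ∧
      ((∃ (FX AX : CochainComplex 𝒢 ℤ) (i : X ⟶ FX) (p : FX ⟶ AX) (w : i ≫ p = 0),
          (ShortComplex.mk i p w).ShortExact ∧ AX ∈ Tilde 𝓐 ∧
          (∀ U ∈ Tilde 𝓐, Ext1Zero U FX)) ∧
       (∃ (FX AX : CochainComplex 𝒢 ℤ) (i : FX ⟶ AX) (p : AX ⟶ X) (w : i ≫ p = 0),
          (ShortComplex.mk i p w).ShortExact ∧ AX ∈ Tilde 𝓐 ∧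
          (∀ U ∈ Tilde 𝓐, Ext1Zero U FX))) := by
  have : IsGrothendieckAbelian.{v} 𝒢 :=
    { hasFilteredColimitsOfSize := inferInstance
      ab5OfSize := inferInstance
      hasSeparator := inferInstance }
  intro X
  obtain ⟨B1, P1, i1, p1, ⟨w1, hs1⟩, hB1, hP1⟩ := CotAux.main_i1 hpair hher X
  obtain ⟨B2, P2, i2, p2, ⟨w2, hs2⟩, hB2, hP2⟩ := CotAux.main_i2 hpair hher X
  obtain ⟨F1, A1, j1, q1, ⟨v1, ht1⟩, hA1, hF1⟩ := CotAux.main_ii1 hpair hher X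
  obtain ⟨F2, A2, j2, q2, ⟨v2, ht2⟩, hA2, hF2⟩ := CotAux.main_ii2 hpair hher X
  exact ⟨⟨⟨B1, P1, i1, p1, w1, hs1, hB1, hP1⟩, ⟨B2, P2, i2, p2, w2, hs2, hB2, hP2⟩⟩,
    ⟨⟨F1, A1, j1, q1, v1, ht1, hA1, hF1⟩, ⟨F2, A2, j2, q2, v2, ht2, hA2, hF2⟩⟩⟩
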